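/- Define S = −E_a[ ln( q^{−1}·( Σ_{ℓ=1}^{q−1} exp(−(1/2)·âᵀQ_ℓâ) + exp(−(1/2)·âᵀPâ) ) ) ], regarded as a function of μ with q, n fixed. Then there exist constants C > 0 and δ ∈ (0,1) such that for all μ ∈ (0,δ): | S + (n(2q−1)/(2q(q−1)))·μ + (n(n+q)(q−1)/(4q²))·μ² | ≤ C·μ³; that is, S = −(n(2q−1)/(2q(q−1)))·μ − (n(n+q)(q−1)/(4q²))·μ² + O(μ³) as μ → 0⁺. -/

import Mathlib

open MeasureTheory ProbabilityTheory Real Finset Matrix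

noncomputable section

/-- `α_i ∈ ℝ^q` (1-based `i` and 1-based coordinate index as in the paper). -/
def alphaVec (q i : ℕ) : Fin q → ℝ :=
  fun k => (Real.sqrt ((i : ℝ) * ((i : ℝ) + 1)))⁻¹ *
    (if (k : ℕ) + 1 < i + 1 then 1
     else if (k : ℕ) + 1 = i + 1 then -(i : ℝ)
     else 0)

/-- `ω_{m,ℓ} = α_{m,ℓ}` for `1 ≤ m ≤ q−2` and `ω_{m,ℓ} = 0` for `m ∈ {q−1, q}`
(the index `m : Fin q` encodes the paper's 1-based index `m+1`). -/
def omegaVec (q : ℕ) (l : Fin q) : Fin q → ℝ :=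
  fun m => if (m : ℕ) < q - 2 then alphaVec q ((m : ℕ) + 1) l else 0

/-- The matrix `Q_ℓ` with entries
`Q_{ℓ,mm'} = μ ω_{m,ℓ} ω_{m',ℓ} + √μ √(1+μq/(q−1)) (ω_{m,ℓ} δ_{m',q−1} + ω_{m',ℓ} δ_{m,q−1})`. -/
def Qmat (q : ℕ) (μ : ℝ) (l : Fin q) : Matrix (Fin q) (Fin q) ℝ :=
  Matrix.of fun m m' =>
    μ * omegaVec q l m * omegaVec q l m'
    + Real.sqrt μ * Real.sqrt (1 + μ * (q : ℝ) / ((q : ℝ) - 1)) *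
      (omegaVec q l m * (if (m' : ℕ) + 1 = q - 1 then 1 else 0)
        + omegaVec q l m' * (if (m : ℕ) + 1 = q - 1 then 1 else 0))

/-- The matrix `P` with entries `P_{mm'} = (1+μq/(q−1))⁻¹` times:
`μq/(q−1)` if `m=m'=q`; `−μq/(q−1)(2+μq/(q−1))` if `m=m'=q−1`;
`√μ √(q/(q−1))` if `{m,m'} = {q−1,q}`; `0` otherwise. -/
def Pmat (q : ℕ) (μ : ℝ) : Matrix (Fin q) (Fin q) ℝ :=
  Matrix.of fun m m' =>
    (1 + μ * (q : ℝ) / ((q : ℝ) - 1))⁻¹ *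
      (if (m : ℕ) + 1 = q ∧ (m' : ℕ) + 1 = q then μ * (q : ℝ) / ((q : ℝ) - 1)
       else if (m : ℕ) + 1 = q - 1 ∧ (m' : ℕ) + 1 = q - 1 then
         -(μ * (q : ℝ) / ((q : ℝ) - 1)) * (2 + μ * (q : ℝ) / ((q : ℝ) - 1))
       else if ((m : ℕ) + 1 = q ∧ (m' : ℕ) + 1 = q - 1) ∨
               ((m : ℕ) + 1 = q - 1 ∧ (m' : ℕ) + 1 = q) then
         Real.sqrt μ * Real.sqrt ((q : ℝ) / ((q : ℝ) - 1))
       else 0)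

/-- The quadratic form `âᵀAâ = Σ_{m,m'} A_{mm'} a_m·a_{m'}` on `(ℝⁿ)^q`. -/
def quadForm (q n : ℕ) (A : Matrix (Fin q) (Fin q) ℝ) (a : Fin q → Fin n → ℝ) : ℝ :=
  ∑ m : Fin q, ∑ m' : Fin q, A m m' * ∑ i, a m i * a m' i

/-- `Z(â) = 1 − q⁻¹ Σ_{ℓ=1}^{q−1} exp(−½ âᵀQ_ℓâ) − q⁻¹ exp(−½ âᵀPâ)`. -/
def Zfun (q n : ℕ) (μ : ℝ) (a : Fin q → Fin n → ℝ) : ℝ :=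
  1 - (1 / (q : ℝ)) * ∑ l ∈ Finset.univ.filter (fun l : Fin q => (l : ℕ) < q - 1),
        Real.exp (-(1 / 2) * quadForm q n (Qmat q μ l) a)
    - (1 / (q : ℝ)) * Real.exp (-(1 / 2) * quadForm q n (Pmat q μ) a)

/-- The law of `â` where all `nq` real components are i.i.d. standard normal. -/
def stdGaussPi (q n : ℕ) : Measure (Fin q → Fin n → ℝ) :=
  Measure.pi fun _ : Fin q => Measure.pi fun _ : Fin n => gaussianReal 0 1

/-- `𝒵_k = (1/k)·E_a[Z^k]`. -/
def calZ (q n : ℕ) (μ : ℝ) (k : ℕ) : ℝ :=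
  (1 / (k : ℝ)) * ∫ a : Fin q → Fin n → ℝ, (Zfun q n μ a) ^ k ∂(stdGaussPi q n)

/-- `S = −E_a[ ln( q⁻¹ ( Σ_{ℓ=1}^{q−1} exp(−½ âᵀQ_ℓâ) + exp(−½ âᵀPâ) ) ) ]`
regarded as a function of `μ` with `q, n` fixed. -/
def Sfun (q n : ℕ) (μ : ℝ) : ℝ :=
  -∫ a : Fin q → Fin n → ℝ,
      Real.log ((1 / (q : ℝ)) *
        ((∑ l ∈ Finset.univ.filter (fun l : Fin q => (l : ℕ) < q - 1),
            Real.exp (-(1 / 2) * quadForm q n (Qmat q μ l) a))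
          + Real.exp (-(1 / 2) * quadForm q n (Pmat q μ) a)))
    ∂(stdGaussPi q n)

lemma se_integrable_pow (k : ℕ) : Integrable (fun x : ℝ => x ^ k) (gaussianReal 0 1) := by
  have h := (memLp_id_gaussianReal (μ := 0) (v := 1) (k : NNReal)).integrable_norm_pow'
  have h2 : Integrable (fun x : ℝ => ‖x ^ k‖) (gaussianReal 0 1) := by
    simpa [norm_pow] using h
  rwa [integrable_norm_iff (by fun_prop)] at h2

/-- one-dimensional Gaussian moment recursion -/
lemma se_moment_rec (k : ℕ) :
    ∫ x : ℝ, x ^ (k + 1) ∂(gaussianReal 0 1) = (k : ℝ) * ∫ x : ℝ, x ^ (k - 1) ∂(gaussianReal 0 1) := by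
  have hI : ∀ j : ℕ, Integrable (fun x : ℝ => x ^ j * gaussianPDFReal 0 1 x) := by
    intro j
    have h := se_integrable_pow j
    rw [gaussianReal_of_var_ne_zero 0 (one_ne_zero)] at h
    have h3 := (integrable_withDensity_iff_integrable_smul'
      (measurable_gaussianPDF 0 1) (ae_of_all _ fun _ => gaussianPDF_lt_top)).1 h
    refine h3.congr (ae_of_all _ fun x => ?_)
    simp [toReal_gaussianPDF, mul_comm]
  have hd : ∀ x : ℝ, HasDerivAt (gaussianPDFReal 0 1) (-(x * gaussianPDFReal 0 1 x)) x := by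
    intro x
    rw [gaussianPDFReal_def]
    have h1 : HasDerivAt (fun x : ℝ => -(x - 0) ^ 2 / (2 * ((1 : NNReal) : ℝ))) (-x) x := by
      have := (((hasDerivAt_id x).sub_const 0).pow 2).neg.div_const (2 * ((1 : NNReal) : ℝ))
      refine this.congr_deriv ?_
      simp; ring
    have := (h1.exp).const_mul ((√(2 * π * ((1 : NNReal) : ℝ)))⁻¹)
    refine this.congr_deriv ?_
    ring
  have key := integral_mul_deriv_eq_deriv_mul_of_integrable
    (u := fun x : ℝ => x ^ k) (u' := fun x : ℝ => (k : ℝ) * x ^ (k - 1))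
    (v := gaussianPDFReal 0 1) (v' := fun x => -(x * gaussianPDFReal 0 1 x))
    (fun x _ => hasDerivAt_pow k x) (fun x _ => hd x)
    (by
      refine (hI (k + 1)).neg.congr (ae_of_all _ fun x => ?_)
      simp only [Pi.neg_apply, Pi.mul_apply]; ring)
    (by
      refine ((hI (k - 1)).const_mul (k : ℝ)).congr (ae_of_all _ fun x => ?_)
      simp only [Pi.mul_apply]; ring)
    (hI k)
  rw [integral_gaussianReal_eq_integral_smul one_ne_zero,
    integral_gaussianReal_eq_integral_smul one_ne_zero]
  have e1 : ∫ x : ℝ, gaussianPDFReal 0 1 x • x ^ (k + 1)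
      = - ∫ x : ℝ, x ^ k * -(x * gaussianPDFReal 0 1 x) := by
    rw [← integral_neg]
    congr 1; ext x; simp only [smul_eq_mul]; ring
  rw [e1, key, neg_neg, ← integral_const_mul]
  congr 1; ext x; simp only [smul_eq_mul]; ring

/-- evaluation of a polynomial in the coordinates -/
def seEv {q n : ℕ} (a : Fin q → Fin n → ℝ) : MvPolynomial (Fin q × Fin n) ℝ →ₐ[ℝ] ℝ :=
  MvPolynomial.aeval (fun p => a p.1 p.2)

lemma seEv_monomial {q n : ℕ} (a : Fin q → Fin n → ℝ) (d : (Fin q × Fin n) →₀ ℕ) (r : ℝ) :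
    seEv a (MvPolynomial.monomial d r) = r * ∏ m, ∏ i, a m i ^ d (m, i) := by
  rw [seEv, MvPolynomial.aeval_monomial, Finsupp.prod_fintype _ _ (by simp),
    Fintype.prod_prod_type]
  simp

instance seProb (q n : ℕ) : IsProbabilityMeasure (stdGaussPi q n) := by
  unfold stdGaussPi; infer_instance

lemma se_integrable_ev {q n : ℕ} (P : MvPolynomial (Fin q × Fin n) ℝ) :
    Integrable (fun a => seEv a P) (stdGaussPi q n) := by
  induction P using MvPolynomial.induction_on' with
  | monomial d r =>
    simp_rw [seEv_monomial]
    refine Integrable.const_mul ?_ r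
    unfold stdGaussPi
    refine Integrable.fintype_prod (f := fun m (b : Fin n → ℝ) => ∏ i, b i ^ d (m, i)) fun m => ?_
    exact Integrable.fintype_prod (f := fun i (x : ℝ) => x ^ d (m, i)) fun i => se_integrable_pow _
  | add p q hp hq =>
    simp_rw [map_add]
    exact hp.add hq

/-- Gaussian expectation as a linear functional on polynomials -/
def seE (q n : ℕ) : MvPolynomial (Fin q × Fin n) ℝ →ₗ[ℝ] ℝ where
  toFun P := ∫ a, seEv a P ∂(stdGaussPi q n)
  map_add' P Q := by
    simp_rw [map_add]
    exact integral_add (se_integrable_ev P) (se_integrable_ev Q)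
  map_smul' r P := by
    simp_rw [map_smul]
    exact integral_smul r _

lemma seE_apply (q n : ℕ) (P : MvPolynomial (Fin q × Fin n) ℝ) :
    seE q n P = ∫ a, seEv a P ∂(stdGaussPi q n) := rfl

def seM (k : ℕ) : ℝ := ∫ x : ℝ, x ^ k ∂(gaussianReal 0 1)

lemma seM_rec (k : ℕ) : seM (k + 1) = k * seM (k - 1) := se_moment_rec k

lemma seE_monomial (q n : ℕ) (d : (Fin q × Fin n) →₀ ℕ) (r : ℝ) :
    seE q n (MvPolynomial.monomial d r) = r * ∏ p, seM (d p) := by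
  rw [seE_apply]
  simp_rw [seEv_monomial]
  rw [integral_const_mul]
  congr 1
  unfold stdGaussPi
  rw [integral_fintype_prod_eq_prod (f := fun m (b : Fin n → ℝ) => ∏ i, b i ^ d (m, i)),
    Fintype.prod_prod_type]
  refine Finset.prod_congr rfl fun m _ => ?_
  rw [integral_fintype_prod_eq_prod (f := fun i (x : ℝ) => x ^ d (m, i))]
  rfl

lemma seE_one (q n : ℕ) : seE q n 1 = 1 := by
  rw [seE_apply]; simp

lemma seE_stein (q n : ℕ) (s : Fin q × Fin n) (P : MvPolynomial (Fin q × Fin n) ℝ) :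
    seE q n (MvPolynomial.X s * P) = seE q n (MvPolynomial.pderiv s P) := by
  induction P using MvPolynomial.induction_on' with
  | monomial d r =>
    rw [MvPolynomial.X, MvPolynomial.monomial_mul, MvPolynomial.pderiv_monomial, seE_monomial,
      seE_monomial, one_mul, mul_assoc]
    congr 1
    rw [← Finset.mul_prod_erase _ _ (Finset.mem_univ s),
      ← Finset.mul_prod_erase (a := s) _ _ (Finset.mem_univ s), ← mul_assoc]
    congr 1
    · simp [add_comm 1, seM_rec]
    · refine Finset.prod_congr rfl fun p hp => ?_
      have : s ≠ p := (Finset.ne_of_mem_erase hp).symm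
      simp [this]
  | add p q hp hq =>
    simp only [mul_add, map_add, hp, hq]

/-- linear coordinate form -/
def seL {q n : ℕ} (u : Fin q → ℝ) (i : Fin n) : MvPolynomial (Fin q × Fin n) ℝ :=
  ∑ m, u m • MvPolynomial.X (m, i)

/-- inner product polynomial -/
def seIp {q : ℕ} (n : ℕ) (u v : Fin q → ℝ) : MvPolynomial (Fin q × Fin n) ℝ :=
  ∑ i, seL u i * seL v i

/-- the derivation attached to a pair of vectors -/
def seD {q : ℕ} (n : ℕ) (u v : Fin q → ℝ) :
    Derivation ℝ (MvPolynomial (Fin q × Fin n) ℝ) (MvPolynomial (Fin q × Fin n) ℝ) :=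
  ∑ i, ∑ m, (u m • seL v i) • MvPolynomial.pderiv (m, i)

lemma seD_apply {q : ℕ} (n : ℕ) (u v : Fin q → ℝ) (P : MvPolynomial (Fin q × Fin n) ℝ) :
    seD n u v P = ∑ i, ∑ m, u m • (seL v i * MvPolynomial.pderiv (m, i) P) := by
  have hs : ∀ {κ : Type} (t : Finset κ) (f : κ → Derivation ℝ (MvPolynomial (Fin q × Fin n) ℝ)
      (MvPolynomial (Fin q × Fin n) ℝ)), (∑ k ∈ t, f k) P = ∑ k ∈ t, f k P := by
    intro κ t f
    have := congrFun (map_sum Derivation.coeFnAddMonoidHom f t) P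
    rw [Finset.sum_apply] at this
    exact this
  simp only [seD, hs]
  simp

lemma se_pderiv_L {q n : ℕ} (v : Fin q → ℝ) (m : Fin q) (i j : Fin n) :
    MvPolynomial.pderiv (m, i) (seL v j) = if i = j then MvPolynomial.C (v m) else 0 := by
  classical
  simp only [seL, map_sum, Derivation.map_smul, MvPolynomial.pderiv_X, Pi.single_apply,
    Prod.mk.injEq]
  by_cases h : i = j
  · subst h
    simp [MvPolynomial.smul_eq_C_mul]
  · have h' : j ≠ i := fun e => h e.symm
    simp [h, h']

lemma seE_ip {q : ℕ} (n : ℕ) (u v : Fin q → ℝ) (P : MvPolynomial (Fin q × Fin n) ℝ) :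
    seE q n (seIp n u v * P) = n * (u ⬝ᵥ v) * seE q n P + seE q n (seD n u v P) := by
  have h1 : seIp n u v * P
      = ∑ i : Fin n, ∑ m, u m • (MvPolynomial.X (m, i) * (seL v i * P)) := by
    simp only [seIp, Finset.sum_mul]
    refine Finset.sum_congr rfl fun i _ => ?_
    rw [mul_assoc]
    conv_lhs => rw [seL]
    rw [Finset.sum_mul]
    simp
  have h2 : ∀ (i : Fin n) (m : Fin q), MvPolynomial.pderiv (m, i) (seL v i * P)
      = v m • P + seL v i * MvPolynomial.pderiv (m, i) P := by
    intro i m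
    rw [MvPolynomial.pderiv_mul, se_pderiv_L]
    simp [MvPolynomial.smul_eq_C_mul]
  rw [h1, seD_apply]
  simp only [map_sum, map_smul, seE_stein, h2, map_add, smul_add, Finset.sum_add_distrib]
  congr 1
  simp [dotProduct, Finset.sum_mul, mul_assoc, Finset.mul_sum]

lemma seD_L {q : ℕ} (n : ℕ) (u v w : Fin q → ℝ) (i : Fin n) :
    seD n u v (seL w i) = (u ⬝ᵥ w) • seL v i := by
  rw [seD_apply]
  simp only [se_pderiv_L]
  rw [Finset.sum_eq_single i]
  · simp only [if_true, dotProduct, Finset.sum_smul, MvPolynomial.smul_eq_C_mul, MvPolynomial.C_mul]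
    refine Finset.sum_congr rfl fun m _ => ?_
    ring
  · intro b _ hb
    simp [hb]
  · simp

lemma seD_ip {q : ℕ} (n : ℕ) (u v w z : Fin q → ℝ) :
    seD n u v (seIp n w z) = (u ⬝ᵥ w) • seIp n v z + (u ⬝ᵥ z) • seIp n v w := by
  simp only [seIp, map_sum, Derivation.leibniz, seD_L, Finset.smul_sum, smul_eq_mul,
    Finset.sum_add_distrib]
  rw [add_comm]
  congr 1
  · refine Finset.sum_congr rfl fun i _ => ?_
    simp [MvPolynomial.smul_eq_C_mul]; ring
  · refine Finset.sum_congr rfl fun i _ => ?_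
    simp [MvPolynomial.smul_eq_C_mul]; ring

lemma seIp_comm {q : ℕ} (n : ℕ) (u v : Fin q → ℝ) : seIp n u v = seIp n v u := by
  simp only [seIp, mul_comm]

lemma seE_ip1 {q : ℕ} (n : ℕ) (u v : Fin q → ℝ) : seE q n (seIp n u v) = n * (u ⬝ᵥ v) := by
  have := seE_ip n u v 1
  simpa [seE_one] using this

lemma seE_ip2 {q : ℕ} (n : ℕ) (u v w z : Fin q → ℝ) :
    seE q n (seIp n u v * seIp n w z)
      = n ^ 2 * (u ⬝ᵥ v) * (w ⬝ᵥ z) + n * ((u ⬝ᵥ w) * (v ⬝ᵥ z) + (u ⬝ᵥ z) * (v ⬝ᵥ w)) := by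
  rw [seE_ip, seD_ip, seE_ip1]
  simp only [map_add, map_smul, seE_ip1, smul_eq_mul]
  ring

/-- third moments of the type that occurs here -/
lemma seE_A2B {q : ℕ} (n : ℕ) (u w e : Fin q → ℝ) (hu : u ⬝ᵥ e = 0) (hw : w ⬝ᵥ e = 0)
    (he : e ⬝ᵥ e = 1) :
    seE q n (seIp n u e ^ 2 * seIp n w w)
      = n ^ 2 * (u ⬝ᵥ u) * (w ⬝ᵥ w) + 2 * n * (u ⬝ᵥ w) ^ 2 := by
  have hu' : e ⬝ᵥ u = 0 := by rw [dotProduct_comm]; exact hu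
  have hw' : e ⬝ᵥ w = 0 := by rw [dotProduct_comm]; exact hw
  rw [pow_two, mul_assoc, seE_ip]
  simp only [Derivation.leibniz, seD_ip, map_add, map_smul, smul_eq_mul, hu, hw, hu', hw', he,
    mul_smul_comm, smul_mul_assoc, seE_ip2, smul_add, mul_add]
  simp only [dotProduct_comm w u]
  ring

lemma seE_A2e {q : ℕ} (n : ℕ) (u e : Fin q → ℝ) (hu : u ⬝ᵥ e = 0)
    (he : e ⬝ᵥ e = 1) :
    seE q n (seIp n u e ^ 2 * seIp n e e)
      = (n ^ 2 + 2 * n) * (u ⬝ᵥ u) := by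
  have hu' : e ⬝ᵥ u = 0 := by rw [dotProduct_comm]; exact hu
  rw [pow_two, mul_assoc, seE_ip]
  simp only [Derivation.leibniz, seD_ip, map_add, map_smul, smul_eq_mul, hu, hu', he,
    mul_smul_comm, smul_mul_assoc, seE_ip2, smul_add, mul_add]
  ring

lemma seE_A4 {q : ℕ} (n : ℕ) (u w e : Fin q → ℝ) (hu : u ⬝ᵥ e = 0) (hw : w ⬝ᵥ e = 0)
    (he : e ⬝ᵥ e = 1) :
    seE q n (seIp n u e ^ 2 * seIp n w e ^ 2)
      = (n ^ 2 + 2 * n) * ((u ⬝ᵥ u) * (w ⬝ᵥ w) + 2 * (u ⬝ᵥ w) ^ 2) := by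
  have hu' : e ⬝ᵥ u = 0 := by rw [dotProduct_comm]; exact hu
  have hw' : e ⬝ᵥ w = 0 := by rw [dotProduct_comm]; exact hw
  have h3 : seE q n (seIp n e e * (seIp n w e * seIp n w e)) = (n ^ 2 + 2 * n) * (w ⬝ᵥ w) := by
    rw [← seE_A2e n w e hw he]; congr 1; ring
  have h4 : seE q n (seIp n u e * (seIp n e e * seIp n w e)) = (n ^ 2 + 2 * n) * (u ⬝ᵥ w) := by
    rw [seE_ip]
    simp only [Derivation.leibniz, seD_ip, map_add, map_smul, smul_eq_mul, hu, hw, hu', hw', he,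
      mul_smul_comm, smul_mul_assoc, seE_ip2, smul_add, mul_add]
    ring
  have e1 : seIp n u e ^ 2 * seIp n w e ^ 2
      = seIp n u e * (seIp n u e * (seIp n w e * seIp n w e)) := by ring
  have e2 : seD n u e (seIp n u e * (seIp n w e * seIp n w e))
      = (u ⬝ᵥ u) • (seIp n e e * (seIp n w e * seIp n w e))
        + (2 * (u ⬝ᵥ w)) • (seIp n u e * (seIp n e e * seIp n w e)) := by
    simp only [Derivation.leibniz, seD_ip, smul_eq_mul, hu, zero_smul, add_zero,
      MvPolynomial.smul_eq_C_mul, map_mul, map_ofNat]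
    ring
  rw [e1, seE_ip, hu, e2, map_add, map_smul, map_smul, h3, h4, smul_eq_mul, smul_eq_mul]
  ring

lemma se_exp_three {E : ℝ} (h : |E| ≤ 1) : |Real.exp E - (1 + E + E ^ 2 / 2)| ≤ |E| ^ 3 := by
  have := Real.exp_bound h (n := 3) (by norm_num)
  simp only [Finset.sum_range_succ, Finset.sum_range_zero] at this
  norm_num [Nat.factorial] at this
  have h3 : 0 ≤ |E| ^ 3 := by positivity
  calc _ ≤ |E| ^ 3 * (2 / 9) := this
    _ ≤ _ := by linarith

lemma se_cosh_six {x : ℝ} (h : |x| ≤ 1) :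
    |Real.cosh x - (1 + x ^ 2 / 2 + (x ^ 2) ^ 2 / 24)| ≤ (x ^ 2) ^ 3 := by
  have h1 := Real.exp_bound h (n := 6) (by norm_num)
  have h2 := Real.exp_bound (x := -x) (by rwa [abs_neg]) (n := 6) (by norm_num)
  have h6 : |x| ^ 6 = (x ^ 2) ^ 3 := by rw [← sq_abs]; ring
  rw [abs_neg] at h2
  rw [h6] at h1 h2
  have h0 : 0 ≤ (x ^ 2) ^ 3 := by positivity
  rw [Real.cosh_eq]
  simp only [Finset.sum_range_succ, Finset.sum_range_zero] at h1 h2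
  norm_num [Nat.factorial] at h1 h2
  rw [abs_le] at *
  constructor <;> nlinarith [h1.1, h1.2, h2.1, h2.2]

set_option maxHeartbeats 1000000 in
/-- one term of the symmetrised product -/
lemma se_term {T E x : ℝ} (hT : T ≤ 1 / 16) (hE : |E| ≤ 2 * T) (hx : x ^ 2 ≤ 4 * T) :
    |Real.exp E * Real.cosh x
      - (1 + E + x ^ 2 / 2 + (E ^ 2 / 2 + E * x ^ 2 / 2 + (x ^ 2) ^ 2 / 24))| ≤ 1000 * T ^ 3 := by
  have hT0 : 0 ≤ T := by nlinarith [abs_nonneg E]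
  have hx1 : |x| ≤ 1 := by
    rw [abs_le_one_iff_mul_self_le_one]; nlinarith
  have h1 := se_exp_three (E := E) (by linarith)
  have h2 := se_cosh_six hx1
  set δ := x ^ 2 with hδ
  have hδ0 : 0 ≤ δ := by positivity
  have hE3 : |E| ^ 3 ≤ (2 * T) ^ 3 := by gcongr
  have hE2 : |E| ^ 2 ≤ (2 * T) ^ 2 := by gcongr
  have hδ3 : δ ^ 3 ≤ (4 * T) ^ 3 := by gcongr
  have hδ2 : δ ^ 2 ≤ (4 * T) ^ 2 := by gcongr
  have T2 : T ^ 2 ≤ T := by nlinarith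
  have T3 : 0 ≤ T ^ 3 := by positivity
  have T4 : T ^ 4 ≤ T ^ 3 := by nlinarith
  set c := Real.cosh x
  set r1 := Real.exp E - (1 + E + E ^ 2 / 2) with hr1
  set r2 := c - (1 + δ / 2 + δ ^ 2 / 24) with hr2
  have hc : |c| ≤ 3 := by
    have : c = 1 + δ / 2 + δ ^ 2 / 24 + r2 := by rw [hr2]; ring
    rw [this, abs_le]
    have := abs_le.1 h2
    constructor <;> nlinarith
  have hP : |1 + E + E ^ 2 / 2| ≤ 3 := by
    have := abs_le.1 hE
    rw [abs_le]
    constructor <;> nlinarith [sq_abs E]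
  have key : Real.exp E * c - (1 + E + δ / 2 + (E ^ 2 / 2 + E * δ / 2 + δ ^ 2 / 24))
      = r1 * c + (1 + E + E ^ 2 / 2) * r2
        + (E * (δ ^ 2 / 24) + E ^ 2 * δ / 4 + E ^ 2 * δ ^ 2 / 48) := by
    rw [hr1, hr2]; ring
  rw [key]
  have a1 : |r1 * c| ≤ 24 * T ^ 3 := by
    rw [abs_mul]
    calc _ ≤ (2 * T) ^ 3 * 3 := by gcongr; linarith
      _ = _ := by ring
  have a2 : |(1 + E + E ^ 2 / 2) * r2| ≤ 192 * T ^ 3 := by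
    rw [abs_mul]
    calc _ ≤ 3 * (4 * T) ^ 3 := by gcongr; linarith
      _ = _ := by ring
  have a3 : |E * (δ ^ 2 / 24)| ≤ 2 * T ^ 3 := by
    rw [abs_mul, abs_of_nonneg (by positivity : 0 ≤ δ ^ 2 / 24)]
    calc _ ≤ (2 * T) * ((4 * T) ^ 2 / 24) := by gcongr
      _ ≤ _ := by nlinarith
  have a4 : |E ^ 2 * δ / 4| ≤ 4 * T ^ 3 := by
    rw [abs_of_nonneg (by positivity), ← sq_abs]
    calc _ ≤ (2 * T) ^ 2 * (4 * T) / 4 := by gcongr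
      _ ≤ _ := by nlinarith
  have a5 : |E ^ 2 * δ ^ 2 / 48| ≤ 2 * T ^ 3 := by
    rw [abs_of_nonneg (by positivity), ← sq_abs]
    calc _ ≤ (2 * T) ^ 2 * (4 * T) ^ 2 / 48 := by gcongr
      _ ≤ _ := by nlinarith
  have := abs_add_le (r1 * c + (1 + E + E ^ 2 / 2) * r2)
    (E * (δ ^ 2 / 24) + E ^ 2 * δ / 4 + E ^ 2 * δ ^ 2 / 48)
  have := abs_add_le (r1 * c) ((1 + E + E ^ 2 / 2) * r2)
  have := abs_add_le (E * (δ ^ 2 / 24) + E ^ 2 * δ / 4) (E ^ 2 * δ ^ 2 / 48)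
  have := abs_add_le (E * (δ ^ 2 / 24)) (E ^ 2 * δ / 4)
  linarith

lemma se_log_three {u : ℝ} (h : |u| ≤ 1 / 2) :
    |Real.log (1 + u) - (u - u ^ 2 / 2)| ≤ 2 * |u| ^ 3 := by
  have h1 := Real.abs_log_sub_add_sum_range_le (x := -u) (by rw [abs_neg]; linarith) 2
  simp only [Finset.sum_range_succ, Finset.sum_range_zero] at h1
  rw [abs_neg, sub_neg_eq_add] at h1
  norm_num at h1
  have e : -u + u ^ 2 / 2 + Real.log (1 + u) = Real.log (1 + u) - (u - u ^ 2 / 2) := by ring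
  rw [e] at h1
  refine h1.trans ?_
  rw [div_le_iff₀ (by linarith)]
  have : 0 ≤ |u| ^ 3 := by positivity
  nlinarith

/-- log-mean-exp -/
def seLme {q : ℕ} (X : Fin q → ℝ) : ℝ := Real.log ((1 / (q : ℝ)) * ∑ l, Real.exp (X l))

lemma seLme_abs_le {q : ℕ} (hq : 1 ≤ q) (X : Fin q → ℝ) (M : ℝ) (h : ∀ l, |X l| ≤ M) :
    |seLme X| ≤ M := by
  have hq0 : (0 : ℝ) < q := by exact_mod_cast hq
  have hub : (1 / (q : ℝ)) * ∑ l, Real.exp (X l) ≤ Real.exp M := by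
    have : ∑ l, Real.exp (X l) ≤ ∑ _l : Fin q, Real.exp M :=
      Finset.sum_le_sum fun l _ => Real.exp_le_exp.2 (abs_le.1 (h l)).2
    simp only [Finset.sum_const, Finset.card_univ, Fintype.card_fin, nsmul_eq_mul] at this
    rw [one_div, inv_mul_le_iff₀ hq0]; exact this
  have hlb : Real.exp (-M) ≤ (1 / (q : ℝ)) * ∑ l, Real.exp (X l) := by
    have : ∑ _l : Fin q, Real.exp (-M) ≤ ∑ l, Real.exp (X l) :=
      Finset.sum_le_sum fun l _ => Real.exp_le_exp.2 (abs_le.1 (h l)).1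
    simp only [Finset.sum_const, Finset.card_univ, Fintype.card_fin, nsmul_eq_mul] at this
    rw [one_div, le_inv_mul_iff₀ hq0]; exact this
  have hpos : 0 < (1 / (q : ℝ)) * ∑ l, Real.exp (X l) := (Real.exp_pos _).trans_le hlb
  rw [abs_le, seLme]
  exact ⟨(Real.le_log_iff_exp_le hpos).2 hlb, (Real.log_le_iff_le_exp hpos).2 hub⟩

lemma seLme_shift {q : ℕ} (hq : 1 ≤ q) (X : Fin q → ℝ) (w : ℝ) :
    seLme (fun l => X l + w) = seLme X + w := by
  have hq0 : (0 : ℝ) < q := by exact_mod_cast hq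
  have : Nonempty (Fin q) := ⟨⟨0, hq⟩⟩
  have hpos : 0 < ∑ l, Real.exp (X l) := Finset.sum_pos (fun l _ => Real.exp_pos _) Finset.univ_nonempty
  simp only [seLme, Real.exp_add, ← Finset.sum_mul, ← mul_assoc]
  rw [Real.log_mul (by positivity) (by positivity), Real.log_exp]

def se2 {q : ℕ} (A B : Fin q → ℝ) : ℝ := (1 / (q : ℝ)) * ∑ l, (A l ^ 2 / 2 + B l)
def se4 {q : ℕ} (A B : Fin q → ℝ) : ℝ :=
  (1 / (q : ℝ)) * ∑ l, (A l ^ 4 / 24 + A l ^ 2 * B l / 2 + B l ^ 2 / 2)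

lemma se_mean_abs {q : ℕ} (hq : 1 ≤ q) (f : Fin q → ℝ) (M : ℝ) (h : ∀ l, |f l| ≤ M) :
    |(1 / (q : ℝ)) * ∑ l, f l| ≤ M := by
  have hq0 : (0 : ℝ) < q := by exact_mod_cast hq
  rw [abs_mul, abs_of_pos (by positivity), one_div, inv_mul_le_iff₀ hq0]
  calc _ ≤ ∑ l, |f l| := Finset.abs_sum_le_sum_abs _ _
    _ ≤ ∑ _l : Fin q, M := Finset.sum_le_sum fun l _ => h l
    _ = _ := by simp

lemma se_pair_sum {q : ℕ} (hq : 1 ≤ q) (A B : Fin q → ℝ) (hA : ∑ l, A l = 0) (s : ℝ) :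
    (1 / (q : ℝ)) * ∑ l, ((1 / (q : ℝ)) * ∑ k, (1 + s ^ 2 * (B l + B k) + (s * (A l - A k)) ^ 2 / 2
      + ((s ^ 2 * (B l + B k)) ^ 2 / 2 + (s ^ 2 * (B l + B k)) * (s * (A l - A k)) ^ 2 / 2
        + ((s * (A l - A k)) ^ 2) ^ 2 / 24)))
    = 1 + s ^ 2 * (2 * se2 A B) + (s ^ 2) ^ 2 * (2 * se4 A B + se2 A B ^ 2) := by
  have hq0 : (q : ℝ) ≠ 0 := by positivity
  set b1 := ∑ l, B l with hb1
  set b2 := ∑ l, B l ^ 2 with hb2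
  set a2 := ∑ l, A l ^ 2 with ha2
  set a3 := ∑ l, A l ^ 3 with ha3
  set a4 := ∑ l, A l ^ 4 with ha4
  set ab := ∑ l, A l * B l with hab
  set aab := ∑ l, A l ^ 2 * B l with haab
  have inner : ∀ l, ∑ k, (1 + s ^ 2 * (B l + B k) + (s * (A l - A k)) ^ 2 / 2
      + ((s ^ 2 * (B l + B k)) ^ 2 / 2 + (s ^ 2 * (B l + B k)) * (s * (A l - A k)) ^ 2 / 2
        + ((s * (A l - A k)) ^ 2) ^ 2 / 24))
      = q + s ^ 2 * (q * B l + b1) + s ^ 2 / 2 * (q * A l ^ 2 + a2)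
        + s ^ 4 / 2 * (q * B l ^ 2 + 2 * B l * b1 + b2)
        + s ^ 4 / 2 * (q * (A l ^ 2 * B l) + A l ^ 2 * b1 + B l * a2 - 2 * A l * ab + aab)
        + s ^ 4 / 24 * (q * A l ^ 4 + 6 * A l ^ 2 * a2 - 4 * A l * a3 + a4) := by
    intro l
    have e : ∀ k, (1 + s ^ 2 * (B l + B k) + (s * (A l - A k)) ^ 2 / 2
      + ((s ^ 2 * (B l + B k)) ^ 2 / 2 + (s ^ 2 * (B l + B k)) * (s * (A l - A k)) ^ 2 / 2
        + ((s * (A l - A k)) ^ 2) ^ 2 / 24))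
      = (1 + s ^ 2 * B l + s ^ 2 / 2 * A l ^ 2 + s ^ 4 / 2 * B l ^ 2 + s ^ 4 / 2 * (A l ^ 2 * B l)
          + s ^ 4 / 24 * A l ^ 4)
        + (s ^ 2 + s ^ 4 * B l + s ^ 4 / 2 * A l ^ 2) * B k
        + (s ^ 2 / 2 + s ^ 4 / 2 * B l + s ^ 4 / 4 * A l ^ 2) * A k ^ 2
        + s ^ 4 / 2 * B k ^ 2 - s ^ 4 * A l * (A k * B k) + s ^ 4 / 2 * (A k ^ 2 * B k)
        - s ^ 4 / 6 * A l * A k ^ 3 + s ^ 4 / 24 * A k ^ 4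
        - (s ^ 2 * A l + s ^ 4 * A l * B l + s ^ 4 / 6 * A l ^ 3) * A k := by
      intro k; ring
    simp only [e, Finset.sum_add_distrib, Finset.sum_sub_distrib, ← Finset.mul_sum, hA,
      ← hb1, ← hb2, ← ha2, ← ha3, ← ha4, ← hab, ← haab]
    simp only [Finset.sum_const, Finset.card_univ, Fintype.card_fin, nsmul_eq_mul]
    ring
  simp only [inner]
  have o : ∀ l, (1 / (q : ℝ)) * (q + s ^ 2 * (q * B l + b1) + s ^ 2 / 2 * (q * A l ^ 2 + a2)
        + s ^ 4 / 2 * (q * B l ^ 2 + 2 * B l * b1 + b2)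
        + s ^ 4 / 2 * (q * (A l ^ 2 * B l) + A l ^ 2 * b1 + B l * a2 - 2 * A l * ab + aab)
        + s ^ 4 / 24 * (q * A l ^ 4 + 6 * A l ^ 2 * a2 - 4 * A l * a3 + a4))
      = (1 / (q : ℝ)) * (q + s ^ 2 * b1 + s ^ 2 / 2 * a2 + s ^ 4 / 2 * b2 + s ^ 4 / 2 * aab
          + s ^ 4 / 24 * a4)
        + (1 / (q : ℝ)) * (s ^ 2 * q + s ^ 4 * b1 + s ^ 4 / 2 * a2) * B l
        + (1 / (q : ℝ)) * (s ^ 2 / 2 * q + s ^ 4 / 2 * b1 + s ^ 4 / 4 * a2) * A l ^ 2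
        + (1 / (q : ℝ)) * (s ^ 4 / 2 * q) * B l ^ 2
        + (1 / (q : ℝ)) * (s ^ 4 / 2 * q) * (A l ^ 2 * B l)
        + (1 / (q : ℝ)) * (s ^ 4 / 24 * q) * A l ^ 4
        - (1 / (q : ℝ)) * (s ^ 4 * ab + s ^ 4 / 6 * a3) * A l := by
    intro l; ring
  have f2 : se2 A B = (1 / (q : ℝ)) * (a2 / 2 + b1) := by
    simp only [se2, Finset.sum_add_distrib, ← Finset.sum_div, ← hb1, ← ha2]
  have f4 : se4 A B = (1 / (q : ℝ)) * (a4 / 24 + aab / 2 + b2 / 2) := by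
    simp only [se4, Finset.sum_add_distrib, ← Finset.sum_div, ← hb2, ← ha4, ← haab]
  simp only [o, Finset.sum_add_distrib, Finset.sum_sub_distrib, ← Finset.mul_sum, hA,
      ← hb1, ← hb2, ← ha2, ← ha4, ← haab, f2, f4]
  simp only [Finset.sum_const, Finset.card_univ, Fintype.card_fin, nsmul_eq_mul]
  field_simp
  ring

lemma se_F_prod {q : ℕ} (hq : 1 ≤ q) (A B : Fin q → ℝ) (s : ℝ) :
    seLme (fun l => s * A l + s ^ 2 * B l) + seLme (fun l => -s * A l + s ^ 2 * B l)
      = Real.log ((1 / (q : ℝ)) * ∑ l, ((1 / (q : ℝ)) * ∑ k,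
          Real.exp (s ^ 2 * (B l + B k)) * Real.cosh (s * (A l - A k)))) := by
  have hq0 : (0 : ℝ) < q := by exact_mod_cast hq
  have : Nonempty (Fin q) := ⟨⟨0, hq⟩⟩
  have hpos : ∀ X : Fin q → ℝ, 0 < ∑ l, Real.exp (X l) := fun X =>
    Finset.sum_pos (fun l _ => Real.exp_pos _) Finset.univ_nonempty
  rw [seLme, seLme, ← Real.log_mul (mul_pos (by positivity) (hpos _)).ne'
    (mul_pos (by positivity) (hpos _)).ne']
  congr 1
  have e1 : (∑ l, Real.exp (s * A l + s ^ 2 * B l)) * ∑ l, Real.exp (-s * A l + s ^ 2 * B l)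
      = ∑ l, ∑ k, Real.exp (s ^ 2 * (B l + B k)) * Real.exp (s * (A l - A k)) := by
    rw [Finset.sum_mul_sum]
    refine Finset.sum_congr rfl fun l _ => Finset.sum_congr rfl fun k _ => ?_
    rw [← Real.exp_add, ← Real.exp_add]; congr 1; ring
  have e2 : ∑ l, ∑ k, Real.exp (s ^ 2 * (B l + B k)) * Real.exp (s * (A l - A k))
      = ∑ l, ∑ k, Real.exp (s ^ 2 * (B l + B k)) * Real.exp (-(s * (A l - A k))) := by
    rw [Finset.sum_comm]
    refine Finset.sum_congr rfl fun l _ => Finset.sum_congr rfl fun k _ => ?_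
    rw [← Real.exp_add, ← Real.exp_add]; congr 1; ring
  have e3 : ∑ l, ∑ k, Real.exp (s ^ 2 * (B l + B k)) * Real.cosh (s * (A l - A k))
      = ∑ l, ∑ k, Real.exp (s ^ 2 * (B l + B k)) * Real.exp (s * (A l - A k)) := by
    have ec : ∀ l k, Real.exp (s ^ 2 * (B l + B k)) * Real.cosh (s * (A l - A k))
        = (1 / 2) * (Real.exp (s ^ 2 * (B l + B k)) * Real.exp (s * (A l - A k)))
          + (1 / 2) * (Real.exp (s ^ 2 * (B l + B k)) * Real.exp (-(s * (A l - A k)))) := by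
      intro l k; rw [Real.cosh_eq]; ring
    simp only [ec, ← Finset.mul_sum, Finset.sum_add_distrib]
    rw [← e2]; ring
  simp only [← Finset.mul_sum]
  rw [e3, ← e1]; ring

set_option maxHeartbeats 1000000 in
lemma se_expansion {q : ℕ} (hq : 1 ≤ q) (A B : Fin q → ℝ) (hA : ∑ l, A l = 0) (s R : ℝ)
    (hR : 0 ≤ R) (hAR : ∀ l, A l ^ 2 ≤ R) (hBR : ∀ l, |B l| ≤ R) :
    |seLme (fun l => s * A l + s ^ 2 * B l) + seLme (fun l => -s * A l + s ^ 2 * B l)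
      - 2 * (s ^ 2 * se2 A B + (s ^ 2) ^ 2 * (se4 A B - se2 A B ^ 2 / 2))|
      ≤ 10000000 * (s ^ 2 * R) ^ 3 := by
  set T := s ^ 2 * R with hT
  have hT0 : 0 ≤ T := by positivity
  have h2 : |s ^ 2 * se2 A B| ≤ 3 / 2 * T := by
    rw [abs_mul, abs_of_nonneg (sq_nonneg s)]
    have : |se2 A B| ≤ 3 / 2 * R := by
      refine se_mean_abs hq _ _ fun l => ?_
      rw [abs_le]
      have := abs_le.1 (hBR l)
      constructor <;> nlinarith [hAR l, sq_nonneg (A l)]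
    calc _ ≤ s ^ 2 * (3 / 2 * R) := by gcongr
      _ = _ := by ring
  have h4 : |(s ^ 2) ^ 2 * se4 A B| ≤ 2 * T ^ 2 := by
    rw [abs_mul, abs_of_nonneg (sq_nonneg (s ^ 2))]
    have : |se4 A B| ≤ 2 * R ^ 2 := by
      refine se_mean_abs hq _ _ fun l => ?_
      have a4 : A l ^ 4 ≤ R ^ 2 := by
        have : A l ^ 4 = (A l ^ 2) ^ 2 := by ring
        rw [this]; have := hAR l; gcongr
      have ab : |A l ^ 2 * B l| ≤ R ^ 2 := by
        rw [abs_mul, abs_of_nonneg (sq_nonneg (A l)), pow_two R]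
        exact mul_le_mul (hAR l) (hBR l) (abs_nonneg _) hR
      have bb : B l ^ 2 ≤ R ^ 2 := by
        rw [← sq_abs]; have := hBR l; gcongr
      have := abs_le.1 ab
      have h0 : 0 ≤ A l ^ 4 := by positivity
      rw [abs_le]
      constructor <;> nlinarith [sq_nonneg (B l)]
    calc _ ≤ (s ^ 2) ^ 2 * (2 * R ^ 2) := by gcongr
      _ = _ := by rw [hT]; ring
  have hsA : ∀ l, (s * A l) ^ 2 ≤ T := fun l => by
    rw [mul_pow]; have := hAR l; rw [hT]; gcongr
  have hsB : ∀ l, |s ^ 2 * B l| ≤ T := fun l => by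
    rw [abs_mul, abs_of_nonneg (sq_nonneg s), hT]; have := hBR l; gcongr
  set x2 := s ^ 2 * se2 A B with hx2
  set x4 := (s ^ 2) ^ 2 * se4 A B with hx4
  have hgoal : 2 * (s ^ 2 * se2 A B + (s ^ 2) ^ 2 * (se4 A B - se2 A B ^ 2 / 2))
      = 2 * x2 + 2 * x4 - x2 ^ 2 := by rw [hx2, hx4]; ring
  rw [hgoal]
  have hx2s : x2 ^ 2 ≤ 9 / 4 * T ^ 2 := by
    rw [← sq_abs]
    calc _ ≤ (3 / 2 * T) ^ 2 := by gcongr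
      _ = _ := by ring
  rcases le_or_gt T (1 / 100) with hs | hs
  · -- small case
    rw [se_F_prod hq]
    set G := (1 / (q : ℝ)) * ∑ l, ((1 / (q : ℝ)) * ∑ k,
          Real.exp (s ^ 2 * (B l + B k)) * Real.cosh (s * (A l - A k))) with hG
    have hρ : |G - (1 + 2 * x2 + (2 * x4 + x2 ^ 2))| ≤ 1000 * T ^ 3 := by
      have e : 1 + 2 * x2 + (2 * x4 + x2 ^ 2)
          = 1 + s ^ 2 * (2 * se2 A B) + (s ^ 2) ^ 2 * (2 * se4 A B + se2 A B ^ 2) := by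
        rw [hx2, hx4]; ring
      rw [e, ← se_pair_sum hq A B hA s, hG, ← mul_sub, ← Finset.sum_sub_distrib]
      refine se_mean_abs hq _ _ fun l => ?_
      rw [← mul_sub, ← Finset.sum_sub_distrib]
      refine se_mean_abs hq _ _ fun k => ?_
      refine se_term (by linarith) ?_ ?_
      · have := abs_le.1 (hsB l)
        have := abs_le.1 (hsB k)
        rw [mul_add, abs_le]; constructor <;> linarith
      · have e : (s * (A l - A k)) ^ 2
            = 2 * (s * A l) ^ 2 + 2 * (s * A k) ^ 2 - (s * A l + s * A k) ^ 2 := by ring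
        rw [e]
        nlinarith [hsA l, hsA k, sq_nonneg (s * A l + s * A k)]
    set ρ := G - (1 + 2 * x2 + (2 * x4 + x2 ^ 2)) with hρd
    set v := 2 * x4 + x2 ^ 2 + ρ with hv
    have hT2 : T ^ 2 ≤ T / 100 := by nlinarith
    have hT3 : T ^ 3 ≤ T ^ 2 / 100 := by nlinarith [sq_nonneg T]
    have T3 : 0 ≤ T ^ 3 := by positivity
    have hvb : |v| ≤ 20 * T ^ 2 := by
      have a1 := abs_le.1 h4
      have a2 := abs_le.1 hρ
      rw [abs_le]
      constructor <;> linarith [sq_nonneg x2]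
    have hu : G = 1 + (2 * x2 + v) := by rw [hv, hρd]; ring
    have hub : |2 * x2 + v| ≤ 4 * T := by
      have a1 := abs_le.1 h2
      have a2 := abs_le.1 hvb
      rw [abs_le]
      constructor <;> nlinarith
    have hl := se_log_three (u := 2 * x2 + v) (by linarith)
    rw [← hu] at hl
    have hu3 : |2 * x2 + v| ^ 3 ≤ (4 * T) ^ 3 := by gcongr
    have e : Real.log G - (2 * x2 + 2 * x4 - x2 ^ 2)
        = (Real.log G - (2 * x2 + v - (2 * x2 + v) ^ 2 / 2)) + ρ - 2 * x2 * v - v ^ 2 / 2 := by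
      have : ρ = v - (2 * x4 + x2 ^ 2) := by rw [hv]; ring
      rw [this]; ring
    rw [e]
    have p1 : |2 * x2 * v| ≤ 60 * T ^ 3 := by
      rw [abs_mul, abs_mul, abs_of_pos (by norm_num : (0:ℝ) < 2)]
      calc _ ≤ 2 * (3 / 2 * T) * (20 * T ^ 2) := by gcongr
        _ = _ := by ring
    have p2 : v ^ 2 / 2 ≤ 2 * T ^ 3 := by
      rw [← sq_abs]
      calc _ ≤ (20 * T ^ 2) ^ 2 / 2 := by gcongr
        _ = 200 * (T * T ^ 3) := by ring
        _ ≤ _ := by linarith [mul_le_mul_of_nonneg_right hs T3]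
    have p1' := abs_le.1 p1
    have p3 := abs_le.1 hρ
    have p4 := abs_le.1 hl
    rw [abs_le]
    constructor <;> linarith [sq_nonneg v]
  · -- large case
    have hlb : ∀ s' : ℝ, (s' = s ∨ s' = -s) →
        |seLme (fun l => s' * A l + s ^ 2 * B l)| ≤ 1 + 2 * T := by
      intro s' hs'
      refine seLme_abs_le hq _ _ fun l => ?_
      have a1 := abs_le.1 (hsB l)
      have a2 : (s' * A l) ^ 2 ≤ T := by
        rcases hs' with rfl | rfl
        · exact hsA l
        · have := hsA l; nlinarith
      rw [abs_le]
      constructor <;> nlinarith [sq_nonneg (s' * A l - 1), sq_nonneg (s' * A l + 1)]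
    have l1 := abs_le.1 (hlb s (Or.inl rfl))
    have l2 := abs_le.1 (hlb (-s) (Or.inr rfl))
    have b2 := abs_le.1 h2
    have b4 := abs_le.1 h4
    have hT2 : T ≤ 100 * T ^ 2 := by nlinarith
    have hT3 : T ^ 2 ≤ 100 * T ^ 3 := by nlinarith [sq_nonneg T]
    have h1 : 1 ≤ 100 * T := by linarith
    rw [abs_le]
    constructor <;> linarith [sq_nonneg x2]

/-- the polynomial behind the linear part -/
def sePA {q : ℕ} (n : ℕ) (U : Fin q → Fin q → ℝ) (e : Fin q → ℝ) (l : Fin q) :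
    MvPolynomial (Fin q × Fin n) ℝ := (-1 : ℝ) • seIp n (U l) e

/-- the polynomial behind the quadratic part -/
def sePB {q : ℕ} (n : ℕ) (W : Fin q → Fin q → ℝ) (e h z : Fin q → ℝ) (l : Fin q) :
    MvPolynomial (Fin q × Fin n) ℝ := (-(h l / 2)) • seIp n (W l) (W l) + z l • seIp n e e

lemma sePA_sq {q : ℕ} (n : ℕ) (U : Fin q → Fin q → ℝ) (e : Fin q → ℝ) (l : Fin q) :
    sePA n U e l ^ 2 = seIp n (U l) e ^ 2 := by
  simp [sePA]

lemma seE_PA2 {q : ℕ} (n : ℕ) (U : Fin q → Fin q → ℝ) (e : Fin q → ℝ) (l : Fin q)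
    (hU : ∀ l, U l ⬝ᵥ e = 0) (he : e ⬝ᵥ e = 1) :
    seE q n (sePA n U e l ^ 2) = n * (U l ⬝ᵥ U l) := by
  rw [sePA_sq, pow_two, seE_ip2, hU, he, dotProduct_comm e, hU]; ring

lemma seE_PB {q : ℕ} (n : ℕ) (W : Fin q → Fin q → ℝ) (e h z : Fin q → ℝ) (l : Fin q)
    (he : e ⬝ᵥ e = 1) :
    seE q n (sePB n W e h z l) = n * (-(h l / 2) * (W l ⬝ᵥ W l) + z l) := by
  simp only [sePB, map_add, map_smul, seE_ip1, he, smul_eq_mul]; ring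

lemma seE_PA4 {q : ℕ} (n : ℕ) (U : Fin q → Fin q → ℝ) (e : Fin q → ℝ) (l k : Fin q)
    (hU : ∀ l, U l ⬝ᵥ e = 0) (he : e ⬝ᵥ e = 1) :
    seE q n (sePA n U e l ^ 2 * sePA n U e k ^ 2)
      = (n ^ 2 + 2 * n) * ((U l ⬝ᵥ U l) * (U k ⬝ᵥ U k) + 2 * (U l ⬝ᵥ U k) ^ 2) := by
  rw [sePA_sq, sePA_sq, seE_A4 n _ _ _ (hU l) (hU k) he]

lemma seE_PA2B {q : ℕ} (n : ℕ) (U W : Fin q → Fin q → ℝ) (e h z : Fin q → ℝ) (l k : Fin q)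
    (hU : ∀ l, U l ⬝ᵥ e = 0) (hW : ∀ l, W l ⬝ᵥ e = 0) (he : e ⬝ᵥ e = 1) :
    seE q n (sePA n U e l ^ 2 * sePB n W e h z k)
      = -(h k / 2) * (n ^ 2 * (U l ⬝ᵥ U l) * (W k ⬝ᵥ W k) + 2 * n * (U l ⬝ᵥ W k) ^ 2)
        + z k * ((n ^ 2 + 2 * n) * (U l ⬝ᵥ U l)) := by
  simp only [sePA_sq, sePB, mul_add, mul_smul_comm, map_add, map_smul,
    seE_A2B n _ _ _ (hU l) (hW k) he, seE_A2e n _ _ (hU l) he, smul_eq_mul]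

lemma seE_PBB {q : ℕ} (n : ℕ) (W : Fin q → Fin q → ℝ) (e h z : Fin q → ℝ) (l k : Fin q)
    (hW : ∀ l, W l ⬝ᵥ e = 0) (he : e ⬝ᵥ e = 1) :
    seE q n (sePB n W e h z l * sePB n W e h z k)
      = h l * h k / 4 * (n ^ 2 * (W l ⬝ᵥ W l) * (W k ⬝ᵥ W k) + 2 * n * (W l ⬝ᵥ W k) ^ 2)
        - n ^ 2 / 2 * (z k * h l * (W l ⬝ᵥ W l) + z l * h k * (W k ⬝ᵥ W k))
        + z l * z k * (n ^ 2 + 2 * n) := by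
  have hW' : ∀ l, e ⬝ᵥ W l = 0 := fun l => by rw [dotProduct_comm]; exact hW l
  simp only [sePB, mul_add, add_mul, mul_smul_comm, smul_mul_assoc, map_add, map_smul,
    seE_ip2, hW, hW', he, smul_eq_mul]
  ring

/-- expectation of the second order coefficient -/
def seE2 {q : ℕ} (n : ℕ) (Γ G : Fin q → Fin q → ℝ) (h z : Fin q → ℝ) : ℝ :=
  (1 / (q : ℝ)) * ∑ l, (n * Γ l l / 2 + n * (-(h l / 2) * G l l + z l))

def seC {q : ℕ} (n : ℕ) (Γ G K : Fin q → Fin q → ℝ) (h z : Fin q → ℝ) (l k : Fin q) : ℝ :=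
  -(h k / 2) * (n ^ 2 * Γ l l * G k k + 2 * n * K l k ^ 2) + z k * ((n ^ 2 + 2 * n) * Γ l l)

def seDD {q : ℕ} (n : ℕ) (G : Fin q → Fin q → ℝ) (h z : Fin q → ℝ) (l k : Fin q) : ℝ :=
  h l * h k / 4 * (n ^ 2 * G l l * G k k + 2 * n * G l k ^ 2)
        - n ^ 2 / 2 * (z k * h l * G l l + z l * h k * G k k)
        + z l * z k * (n ^ 2 + 2 * n)

def seAA {q : ℕ} (n : ℕ) (Γ : Fin q → Fin q → ℝ) (l k : Fin q) : ℝ :=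
  (n ^ 2 + 2 * n) * (Γ l l * Γ k k + 2 * Γ l k ^ 2)

/-- expectation of the fourth order coefficient -/
def seE4 {q : ℕ} (n : ℕ) (Γ G K : Fin q → Fin q → ℝ) (h z : Fin q → ℝ) : ℝ :=
  (1 / (q : ℝ)) * ∑ l, (seAA n Γ l l / 24 + seC n Γ G K h z l l / 2 + seDD n G h z l l / 2)
  - (1 / (q : ℝ)) ^ 2 / 2 * ∑ l, ∑ k, (seAA n Γ l k / 4 + seC n Γ G K h z l k / 2
      + seC n Γ G K h z k l / 2 + seDD n G h z l k)

def seP2 {q : ℕ} (n : ℕ) (U W : Fin q → Fin q → ℝ) (e h z : Fin q → ℝ) :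
    MvPolynomial (Fin q × Fin n) ℝ :=
  (1 / (q : ℝ)) • ∑ l, ((1 / 2 : ℝ) • sePA n U e l ^ 2 + sePB n W e h z l)

def seP4 {q : ℕ} (n : ℕ) (U W : Fin q → Fin q → ℝ) (e h z : Fin q → ℝ) :
    MvPolynomial (Fin q × Fin n) ℝ :=
  (1 / (q : ℝ)) • ∑ l, ((1 / 24 : ℝ) • (sePA n U e l ^ 2 * sePA n U e l ^ 2)
    + (1 / 2 : ℝ) • (sePA n U e l ^ 2 * sePB n W e h z l)
    + (1 / 2 : ℝ) • (sePB n W e h z l * sePB n W e h z l))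
  - (1 / 2 : ℝ) • (seP2 n U W e h z * seP2 n U W e h z)

lemma seEv_P2 {q n : ℕ} (U W : Fin q → Fin q → ℝ) (e h z : Fin q → ℝ) (a : Fin q → Fin n → ℝ) :
    seEv a (seP2 n U W e h z)
      = se2 (fun l => seEv a (sePA n U e l)) (fun l => seEv a (sePB n W e h z l)) := by
  simp only [seP2, se2, map_smul, map_sum, map_add, map_pow, smul_eq_mul]
  congr 1
  refine Finset.sum_congr rfl fun l _ => ?_
  ring

lemma seEv_P4 {q n : ℕ} (U W : Fin q → Fin q → ℝ) (e h z : Fin q → ℝ) (a : Fin q → Fin n → ℝ) :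
    seEv a (seP4 n U W e h z)
      = se4 (fun l => seEv a (sePA n U e l)) (fun l => seEv a (sePB n W e h z l))
        - se2 (fun l => seEv a (sePA n U e l)) (fun l => seEv a (sePB n W e h z l)) ^ 2 / 2 := by
  rw [← seEv_P2]
  simp only [seP4, se4, map_smul, map_sum, map_add, map_sub, map_mul, map_pow, smul_eq_mul]
  congr 1
  · congr 1
    refine Finset.sum_congr rfl fun l _ => ?_
    ring
  · ring

lemma seE_P2 {q : ℕ} (n : ℕ) (U W : Fin q → Fin q → ℝ) (e h z : Fin q → ℝ)
    (hU : ∀ l, U l ⬝ᵥ e = 0) (he : e ⬝ᵥ e = 1) :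
    seE q n (seP2 n U W e h z)
      = seE2 n (fun l k => U l ⬝ᵥ U k) (fun l k => W l ⬝ᵥ W k) h z := by
  simp only [seP2, seE2, map_smul, map_sum, map_add, seE_PA2 n U e _ hU he, seE_PB n W e h z _ he,
    smul_eq_mul]
  congr 1
  refine Finset.sum_congr rfl fun l _ => ?_
  ring

lemma se_alg_expand {M : Type*} [CommRing M] [Algebra ℝ M] (x y z w : M) :
    ((1 / 2 : ℝ) • x + y) * ((1 / 2 : ℝ) • z + w)
      = (1 / 4 : ℝ) • (x * z) + (1 / 2 : ℝ) • (x * w) + (1 / 2 : ℝ) • (z * y) + y * w := by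
  have h4 : algebraMap ℝ M (1 / 4) = algebraMap ℝ M (1 / 2) * algebraMap ℝ M (1 / 2) := by
    rw [← map_mul]; norm_num
  simp only [Algebra.smul_def, h4]
  ring

set_option maxHeartbeats 1000000 in
lemma seE_P4 {q : ℕ} (n : ℕ) (U W : Fin q → Fin q → ℝ) (e h z : Fin q → ℝ)
    (hU : ∀ l, U l ⬝ᵥ e = 0) (hW : ∀ l, W l ⬝ᵥ e = 0) (he : e ⬝ᵥ e = 1) :
    seE q n (seP4 n U W e h z)
      = seE4 n (fun l k => U l ⬝ᵥ U k) (fun l k => W l ⬝ᵥ W k) (fun l k => U l ⬝ᵥ W k) h z := by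
  have hsq : seE q n (seP2 n U W e h z * seP2 n U W e h z)
      = (1 / (q : ℝ)) ^ 2 * ∑ l, ∑ k, (
        seAA n (fun l k => U l ⬝ᵥ U k) l k / 4
      + seC n (fun l k => U l ⬝ᵥ U k) (fun l k => W l ⬝ᵥ W k) (fun l k => U l ⬝ᵥ W k) h z l k / 2
      + seC n (fun l k => U l ⬝ᵥ U k) (fun l k => W l ⬝ᵥ W k) (fun l k => U l ⬝ᵥ W k) h z k l / 2
      + seDD n (fun l k => W l ⬝ᵥ W k) h z l k) := by
    rw [seP2, smul_mul_smul_comm, Finset.sum_mul_sum, map_smul, smul_eq_mul, pow_two]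
    congr 1
    rw [map_sum]
    refine Finset.sum_congr rfl fun l _ => ?_
    rw [map_sum]
    refine Finset.sum_congr rfl fun k _ => ?_
    have e1 : ((1 / 2 : ℝ) • sePA n U e l ^ 2 + sePB n W e h z l)
        * ((1 / 2 : ℝ) • sePA n U e k ^ 2 + sePB n W e h z k)
        = (1 / 4 : ℝ) • (sePA n U e l ^ 2 * sePA n U e k ^ 2)
          + (1 / 2 : ℝ) • (sePA n U e l ^ 2 * sePB n W e h z k)
          + (1 / 2 : ℝ) • (sePA n U e k ^ 2 * sePB n W e h z l)
          + sePB n W e h z l * sePB n W e h z k := by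
      exact se_alg_expand _ _ _ _
    rw [e1]
    simp only [map_add, map_smul, seE_PA4 n U e _ _ hU he, seE_PA2B n U W e h z _ _ hU hW he,
      seE_PBB n W e h z _ _ hW he, smul_eq_mul, seAA, seC, seDD]
    ring
  rw [seP4, map_sub, map_smul, map_smul, hsq, seE4]
  simp only [map_sum, map_add, map_smul, seE_PA4 n U e _ _ hU he, seE_PA2B n U W e h z _ _ hU hW he,
      seE_PBB n W e h z _ _ hW he, smul_eq_mul]
  congr 1
  · congr 1
    refine Finset.sum_congr rfl fun l _ => ?_
    simp only [seAA, seC, seDD]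
    ring
  · ring

/-- row entries of the orthonormal system -/
def seAl (m l : ℕ) : ℝ :=
  (Real.sqrt ((((m + 1 : ℕ) : ℝ)) * ((((m + 1 : ℕ) : ℝ)) + 1)))⁻¹ *
    (if l + 1 < m + 1 + 1 then 1 else if l + 1 = m + 1 + 1 then -(((m + 1 : ℕ) : ℝ)) else 0)

lemma seAl_mul (m l k : ℕ) : seAl m l * seAl m k = ((m + 1 : ℝ) * (m + 2))⁻¹ *
    ((if l < m + 1 then 1 else if l = m + 1 then -((m + 1 : ℝ)) else 0) *
    (if k < m + 1 then 1 else if k = m + 1 then -((m + 1 : ℝ)) else 0)) := by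
  have h0 : (0 : ℝ) ≤ (m + 1) * (m + 2) := by positivity
  have h : (Real.sqrt ((m + 1 : ℝ) * (m + 2)))⁻¹ * (Real.sqrt ((m + 1 : ℝ) * (m + 2)))⁻¹
      = ((m + 1 : ℝ) * (m + 2))⁻¹ := by
    rw [← mul_inv, Real.mul_self_sqrt h0]
  rw [← h]
  have h2 : (m : ℝ) + 1 + 1 = m + 2 := by ring
  simp only [seAl, Nat.cast_add, Nat.cast_one, h2, Nat.add_lt_add_iff_right, Nat.add_right_cancel_iff]
  ring

lemma seAl_gram (N l k : ℕ) (hl : l ≤ N) (hk : k ≤ N) :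
    ∑ m ∈ Finset.range N, seAl m l * seAl m k = (if l = k then 1 else 0) - 1 / ((N : ℝ) + 1) := by
  induction N generalizing l k with
  | zero =>
    obtain rfl : l = 0 := by omega
    obtain rfl : k = 0 := by omega
    simp
  | succ N ih =>
    have hz : ∀ m ∈ Finset.range N, seAl m (N + 1) = 0 := by
      intro m hm
      have := Finset.mem_range.1 hm
      have h1 : ¬ (N + 1 + 1 < m + 1 + 1) := by omega
      have h2 : ¬ (N + 1 + 1 = m + 1 + 1) := by omega
      simp only [seAl, if_neg h1, if_neg h2, mul_zero]
    have p1 : (N : ℝ) + 1 ≠ 0 := by positivity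
    have p2 : (N : ℝ) + 2 ≠ 0 := by positivity
    have p3 : (N : ℝ) + 1 + 1 ≠ 0 := by positivity
    rw [Finset.sum_range_succ, seAl_mul]
    rcases Nat.lt_or_ge N l with h1 | h1
    · obtain rfl : l = N + 1 := by omega
      rw [Finset.sum_eq_zero (fun m hm => by rw [hz m hm, zero_mul])]
      rcases Nat.lt_or_ge N k with h2 | h2
      · obtain rfl : k = N + 1 := by omega
        simp
        field_simp
        ring
      · have : k < N + 1 := by omega
        have h3 : ¬ (N + 1 = k) := by omega
        simp [this, h3]
        field_simp
        ring
    · rcases Nat.lt_or_ge N k with h2 | h2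
      · obtain rfl : k = N + 1 := by omega
        rw [Finset.sum_eq_zero (fun m hm => by rw [hz m hm, mul_zero])]
        have : l < N + 1 := by omega
        have h3 : ¬ (l = N + 1) := by omega
        simp [this, h3]
        field_simp
        ring
      · rw [ih l k h1 h2]
        have h3 : l < N + 1 := by omega
        have h4 : k < N + 1 := by omega
        simp only [h3, h4, if_true]
        push_cast
        have : (1 : ℝ) / (N + 1) - ((N + 1 : ℝ) * (N + 2))⁻¹ = 1 / (N + 1 + 1) := by
          field_simp
          ring
        linarith

lemma se_omega_gram (N : ℕ) (l k : Fin (N + 2)) (hl : (l : ℕ) ≤ N) (hk : (k : ℕ) ≤ N) :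
    omegaVec (N + 2) l ⬝ᵥ omegaVec (N + 2) k = (if l = k then 1 else 0) - 1 / ((N : ℝ) + 1) := by
  have : (if l = k then (1:ℝ) else 0) = if (l : ℕ) = k then 1 else 0 := by
    simp [Fin.ext_iff]
  rw [this, ← seAl_gram N l k hl hk]
  have h : ∀ l m : Fin (N + 2), omegaVec (N + 2) l m = if (m : ℕ) < N then seAl m l else 0 := by
    intro l m
    simp [omegaVec, alphaVec, seAl]
  simp only [dotProduct, h]
  rw [Fin.sum_univ_eq_sum_range (fun m => (if m < N then seAl m l else 0) * (if m < N then seAl m k else 0)) (N+2),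
    Finset.sum_range_succ, Finset.sum_range_succ]
  simp only [lt_irrefl, if_false, mul_zero, add_zero, Nat.not_succ_lt_self]
  refine Finset.sum_congr rfl fun m hm => ?_
  simp [Finset.mem_range.1 hm]

/-- the two special directions -/
def seX (N : ℕ) : Fin (N + 2) → ℝ := Pi.single (Fin.last N).castSucc 1

def seY (N : ℕ) : Fin (N + 2) → ℝ := Pi.single (Fin.last (N + 1)) 1

def seKa (N : ℕ) : ℝ := ((N : ℝ) + 2) / (N + 1)

lemma seKa_pos (N : ℕ) : 0 < seKa N := by unfold seKa; positivity

def seOm (N : ℕ) : Fin (N + 2) → Fin (N + 2) → ℝ :=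
  Fin.snoc (α := fun _ => Fin (N + 2) → ℝ) (fun l => omegaVec (N + 2) l.castSucc) (Real.sqrt (seKa N) • seY N)

def seSn {N : ℕ} (x y : ℝ) : Fin (N + 2) → ℝ :=
  Fin.snoc (α := fun _ => ℝ) (fun _ => x) y

@[simp] lemma seSn_c {N : ℕ} (x y : ℝ) (l : Fin (N + 1)) : (seSn x y : Fin (N + 2) → ℝ) l.castSucc = x := by
  simp [seSn]

@[simp] lemma seSn_l {N : ℕ} (x y : ℝ) : (seSn x y : Fin (N + 2) → ℝ) (Fin.last (N + 1)) = y := by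
  simp [seSn]

lemma seOm_c (N : ℕ) (l : Fin (N + 1)) : seOm N l.castSucc = omegaVec (N + 2) l.castSucc := by
  simp [seOm]

lemma seOm_l (N : ℕ) : seOm N (Fin.last (N + 1)) = Real.sqrt (seKa N) • seY N := by
  simp [seOm]

/-- Gram matrix -/
def seG (N : ℕ) (l k : Fin (N + 2)) : ℝ :=
  (if l = k then 1 else 0) - 1 / ((N : ℝ) + 1) +
    1 / ((N : ℝ) + 1) * (seSn 0 1 l + seSn 0 1 k)

lemma seX_seX (N : ℕ) : seX N ⬝ᵥ seX N = 1 := by simp [seX]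

lemma seOm_X (N : ℕ) (l : Fin (N + 2)) : seOm N l ⬝ᵥ seX N = 0 := by
  refine Fin.lastCases ?_ (fun l => ?_) l
  · rw [seOm_l]; simp [seX, seY, Pi.single_apply, Fin.ext_iff]
  · rw [seOm_c]; simp [seX, omegaVec]

lemma seOm_gram (N : ℕ) (l k : Fin (N + 2)) : seOm N l ⬝ᵥ seOm N k = seG N l k := by
  have p1 : (N : ℝ) + 1 ≠ 0 := by positivity
  refine Fin.lastCases ?_ (fun l => ?_) l
  · refine Fin.lastCases ?_ (fun k => ?_) k
    · rw [seOm_l]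
      have : Real.sqrt (seKa N) * Real.sqrt (seKa N) = seKa N := Real.mul_self_sqrt (seKa_pos N).le
      simp [seY, seG, this]
      rw [seKa]; field_simp; ring
    · rw [seOm_l, seOm_c]
      have : ¬ (Fin.last (N + 1) = k.castSucc) := (Fin.castSucc_lt_last k).ne'
      simp [seY, seG, omegaVec, this]
  · refine Fin.lastCases ?_ (fun k => ?_) k
    · rw [seOm_l, seOm_c]
      have : ¬ (l.castSucc = Fin.last (N + 1)) := (Fin.castSucc_lt_last l).ne
      simp [seY, seG, omegaVec, this]
    · rw [seOm_c, seOm_c, se_omega_gram _ _ _ (by simp; omega) (by simp; omega)]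
      simp [seG]

lemma seEv_L {q n : ℕ} (a : Fin q → Fin n → ℝ) (u : Fin q → ℝ) (i : Fin n) :
    seEv a (seL u i) = ∑ m, u m * a m i := by
  simp [seEv, seL]

lemma seEv_ip {q n : ℕ} (a : Fin q → Fin n → ℝ) (u v : Fin q → ℝ) :
    seEv a (seIp n u v) = ∑ i, (∑ m, u m * a m i) * (∑ m, v m * a m i) := by
  simp only [seIp, map_sum, map_mul, seEv_L]

lemma se_quad_outer {q n : ℕ} (a : Fin q → Fin n → ℝ) (u v : Fin q → ℝ) :
    quadForm q n (Matrix.of fun m m' => u m * v m') a = seEv a (seIp n u v) := by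
  rw [seEv_ip]
  simp only [Finset.sum_mul_sum]
  rw [Finset.sum_comm]
  unfold quadForm
  refine Finset.sum_congr rfl fun m _ => ?_
  rw [Finset.sum_comm]
  refine Finset.sum_congr rfl fun m' _ => ?_
  rw [Finset.mul_sum]
  refine Finset.sum_congr rfl fun i _ => ?_
  simp only [Matrix.of_apply]
  ring

lemma se_quad_add {q n : ℕ} (a : Fin q → Fin n → ℝ) (A B : Matrix (Fin q) (Fin q) ℝ) :
    quadForm q n (A + B) a = quadForm q n A a + quadForm q n B a := by
  simp only [quadForm, Matrix.add_apply, add_mul, Finset.sum_add_distrib]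

lemma se_quad_smul {q n : ℕ} (a : Fin q → Fin n → ℝ) (r : ℝ) (A : Matrix (Fin q) (Fin q) ℝ) :
    quadForm q n (r • A) a = r * quadForm q n A a := by
  simp only [quadForm, Matrix.smul_apply, smul_eq_mul, mul_assoc, Finset.mul_sum]

lemma seX_apply (N : ℕ) (m : Fin (N + 2)) : seX N m = if (m : ℕ) + 1 = N + 2 - 1 then 1 else 0 := by
  simp [seX, Pi.single_apply, Fin.ext_iff]

lemma seY_apply (N : ℕ) (m : Fin (N + 2)) : seY N m = if (m : ℕ) + 1 = N + 2 then 1 else 0 := by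
  simp [seY, Pi.single_apply, Fin.ext_iff]

lemma se_quadQ (N n : ℕ) (μ : ℝ) (l : Fin (N + 2)) (a : Fin (N + 2) → Fin n → ℝ) :
    quadForm (N + 2) n (Qmat (N + 2) μ l) a
      = μ * seEv a (seIp n (omegaVec (N + 2) l) (omegaVec (N + 2) l))
        + 2 * (Real.sqrt μ * Real.sqrt (1 + μ * seKa N)) * seEv a (seIp n (omegaVec (N + 2) l) (seX N)) := by
  have hk : μ * ((N + 2 : ℕ) : ℝ) / (((N + 2 : ℕ) : ℝ) - 1) = μ * seKa N := by
    unfold seKa; push_cast; rw [mul_div_assoc]; congr 2; ring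
  have : Qmat (N + 2) μ l = μ • (Matrix.of fun m m' => omegaVec (N + 2) l m * omegaVec (N + 2) l m')
      + (Real.sqrt μ * Real.sqrt (1 + μ * seKa N)) • ((Matrix.of fun m m' => omegaVec (N + 2) l m * seX N m')
        + (Matrix.of fun m m' => seX N m * omegaVec (N + 2) l m')) := by
    ext m m'
    simp only [Qmat, hk, Matrix.of_apply, Matrix.add_apply, Matrix.smul_apply, smul_eq_mul, seX_apply]
    ring
  rw [this, se_quad_add, se_quad_smul, se_quad_smul, se_quad_add, se_quad_outer, se_quad_outer,
    se_quad_outer, seIp_comm n (seX N)]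
  ring

lemma se_quadP (N n : ℕ) (μ : ℝ) (a : Fin (N + 2) → Fin n → ℝ) :
    quadForm (N + 2) n (Pmat (N + 2) μ) a
      = (1 + μ * seKa N)⁻¹ * (μ * seKa N * seEv a (seIp n (seY N) (seY N))
        - μ * seKa N * (2 + μ * seKa N) * seEv a (seIp n (seX N) (seX N))
        + 2 * (Real.sqrt μ * Real.sqrt (seKa N)) * seEv a (seIp n (seY N) (seX N))) := by
  have hk : μ * ((N + 2 : ℕ) : ℝ) / (((N + 2 : ℕ) : ℝ) - 1) = μ * seKa N := by
    unfold seKa; push_cast; rw [mul_div_assoc]; congr 2; ring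
  have hk2 : ((N + 2 : ℕ) : ℝ) / (((N + 2 : ℕ) : ℝ) - 1) = seKa N := by
    unfold seKa; push_cast; congr 1; ring
  have : Pmat (N + 2) μ = (1 + μ * seKa N)⁻¹ • ((μ * seKa N) • (Matrix.of fun m m' => seY N m * seY N m')
      + (-(μ * seKa N) * (2 + μ * seKa N)) • (Matrix.of fun m m' => seX N m * seX N m')
      + (Real.sqrt μ * Real.sqrt (seKa N)) • ((Matrix.of fun m m' => seY N m * seX N m')
        + (Matrix.of fun m m' => seX N m * seY N m'))) := by
    ext m m'
    simp only [Pmat, hk, hk2, Matrix.of_apply, Matrix.add_apply, Matrix.smul_apply, smul_eq_mul, seX_apply, seY_apply]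
    congr 1
    by_cases h1 : (m : ℕ) + 1 = N + 2
    · by_cases h2 : (m' : ℕ) + 1 = N + 2
      · simp [h1, h2]
      · have h3 : ¬ ((m' : ℕ) = N + 1) := by omega
        simp [h1, h3]
    · have h3 : ¬ ((m : ℕ) = N + 1) := by omega
      by_cases h2 : (m' : ℕ) + 1 = N + 2
      · simp [h3, h2]
      · have h4 : ¬ ((m' : ℕ) = N + 1) := by omega
        simp [h3, h4]
        split_ifs <;> simp_all
  rw [this, se_quad_smul, se_quad_add, se_quad_add, se_quad_smul, se_quad_smul, se_quad_smul, se_quad_add, se_quad_outer, se_quad_outer,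
    se_quad_outer, se_quad_outer, seIp_comm n (seX N) (seY N)]
  ring

def seRho (N : ℕ) (c : ℝ) : Fin (N + 2) → ℝ := seSn (Real.sqrt (1 + c)) (1 + c)⁻¹

def seH (N : ℕ) (c : ℝ) : Fin (N + 2) → ℝ := seSn 1 (1 + c)⁻¹

def seZ (N : ℕ) (c : ℝ) : Fin (N + 2) → ℝ := seSn 0 ((1 + c)⁻¹ * seKa N / 2 * (2 + c))

/-- mean direction -/
def seV (N : ℕ) (c : ℝ) : Fin (N + 2) → ℝ :=
  (1 / ((N : ℝ) + 2)) • ∑ k, seRho N c k • seOm N k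

def seU (N : ℕ) (c : ℝ) (l : Fin (N + 2)) : Fin (N + 2) → ℝ :=
  seRho N c l • seOm N l - seV N c

lemma seU_sum (N : ℕ) (c : ℝ) : ∑ l, seU N c l = 0 := by
  have : ((N : ℝ) + 2) ≠ 0 := by positivity
  simp only [seU, Finset.sum_sub_distrib, Finset.sum_const, Finset.card_univ, Fintype.card_fin]
  rw [seV, ← Nat.cast_smul_eq_nsmul ℝ, smul_smul]
  push_cast
  rw [mul_one_div_cancel this, one_smul, sub_self]

lemma seV_X (N : ℕ) (c : ℝ) : seV N c ⬝ᵥ seX N = 0 := by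
  simp [seV, sum_dotProduct, seOm_X]

lemma seU_X (N : ℕ) (c : ℝ) (l : Fin (N + 2)) : seU N c l ⬝ᵥ seX N = 0 := by
  simp [seU, sub_dotProduct, seOm_X, seV_X]

lemma seG_rho (N : ℕ) (c : ℝ) (l : Fin (N + 2)) :
    ∑ k, seRho N c k * seG N k l = (1 + c)⁻¹ * seKa N * seSn 0 1 l := by
  have p : (N : ℝ) + 1 ≠ 0 := by positivity
  rw [Fin.sum_univ_castSucc]
  refine Fin.lastCases ?_ (fun l => ?_) l
  · have : ∀ k : Fin (N + 1), ¬ (k.castSucc = Fin.last (N + 1)) := fun k => (Fin.castSucc_lt_last k).ne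
    simp [seRho, seG, this, seKa]
    left
    field_simp
    ring
  · have : ¬ (Fin.last (N + 1) = l.castSucc) := (Fin.castSucc_lt_last l).ne'
    simp [seRho, seG, this, ← Finset.mul_sum, Finset.sum_sub_distrib]
    right
    field_simp
    ring

lemma seV_Om (N : ℕ) (c : ℝ) (l : Fin (N + 2)) :
    seV N c ⬝ᵥ seOm N l = (1 / ((N : ℝ) + 2)) * ((1 + c)⁻¹ * seKa N * seSn 0 1 l) := by
  rw [← seG_rho, seV, smul_dotProduct, sum_dotProduct, smul_eq_mul]
  simp only [smul_dotProduct, seOm_gram, smul_eq_mul]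

lemma seV_V (N : ℕ) (c : ℝ) :
    seV N c ⬝ᵥ seV N c = (1 / ((N : ℝ) + 2)) ^ 2 * ((1 + c)⁻¹ ^ 2 * seKa N) := by
  conv_lhs => rhs; rw [seV]
  rw [dotProduct_smul, dotProduct_sum]
  simp only [dotProduct_smul, seV_Om, smul_eq_mul]
  rw [Fin.sum_univ_castSucc]
  simp only [seSn_c, seSn_l, mul_zero, Finset.sum_const_zero, zero_add, seRho, mul_one]
  ring

def seGam (N : ℕ) (c : ℝ) (l k : Fin (N + 2)) : ℝ :=
  seRho N c l * seRho N c k * seG N l k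
    - (1 / ((N : ℝ) + 2)) * ((1 + c)⁻¹ * seKa N) * (seRho N c l * seSn 0 1 l + seRho N c k * seSn 0 1 k)
    + (1 / ((N : ℝ) + 2)) ^ 2 * ((1 + c)⁻¹ ^ 2 * seKa N)

def seKK (N : ℕ) (c : ℝ) (l k : Fin (N + 2)) : ℝ :=
  seRho N c l * seG N l k - (1 / ((N : ℝ) + 2)) * ((1 + c)⁻¹ * seKa N * seSn 0 1 k)

lemma seU_Om (N : ℕ) (c : ℝ) (l k : Fin (N + 2)) : seU N c l ⬝ᵥ seOm N k = seKK N c l k := by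
  rw [seU, sub_dotProduct, smul_dotProduct, seV_Om, seOm_gram, seKK, smul_eq_mul]

lemma seU_U (N : ℕ) (c : ℝ) (l k : Fin (N + 2)) : seU N c l ⬝ᵥ seU N c k = seGam N c l k := by
  conv_lhs => rhs; rw [seU]
  rw [dotProduct_sub, dotProduct_smul, seU_Om, seU, sub_dotProduct, smul_dotProduct, seV_V,
    dotProduct_comm (seOm N l), seV_Om, seGam, seKK]
  simp only [smul_eq_mul]
  ring

/-- the argument of the log-mean-exp as a polynomial -/
def sePX (N n : ℕ) (s : ℝ) (c : ℝ) (l : Fin (N + 2)) : MvPolynomial (Fin (N + 2) × Fin n) ℝ :=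
  (-(s * seRho N c l)) • seIp n (seOm N l) (seX N)
    + (s ^ 2) • sePB n (seOm N) (seX N) (seH N c) (seZ N c) l

lemma seEv_smul_ip {q n : ℕ} (a : Fin q → Fin n → ℝ) (r : ℝ) (u v : Fin q → ℝ) :
    seEv a (seIp n (r • u) v) = r * seEv a (seIp n u v) := by
  simp only [seEv_ip, Pi.smul_apply, smul_eq_mul, Finset.mul_sum, mul_assoc, Finset.sum_mul]

lemma seEv_sub_ip {q n : ℕ} (a : Fin q → Fin n → ℝ) (u v w : Fin q → ℝ) :
    seEv a (seIp n (u - v) w) = seEv a (seIp n u w) - seEv a (seIp n v w) := by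
  simp only [seEv_ip, Pi.sub_apply, sub_mul, Finset.sum_sub_distrib]

lemma seEv_sum_ip {q n : ℕ} (a : Fin q → Fin n → ℝ) {ι : Type*} (t : Finset ι) (u : ι → Fin q → ℝ) (w : Fin q → ℝ) :
    seEv a (seIp n (∑ i ∈ t, u i) w) = ∑ i ∈ t, seEv a (seIp n (u i) w) := by
  simp only [seEv_ip, Finset.sum_apply, Finset.sum_mul]
  symm
  rw [Finset.sum_comm]
  refine Finset.sum_congr rfl fun i _ => ?_
  rw [Finset.sum_comm]

lemma se_filter_sum (N : ℕ) (f : Fin (N + 2) → ℝ) :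
    ∑ l ∈ Finset.univ.filter (fun l : Fin (N + 2) => (l : ℕ) < N + 2 - 1), f l
      = ∑ l : Fin (N + 1), f l.castSucc := by
  rw [Finset.sum_filter, Fin.sum_univ_castSucc]
  have : ∀ x : Fin (N + 1), (x : ℕ) ≤ N := fun x => by omega
  simp [this]

lemma se_integrand (N n : ℕ) (μ : ℝ) (hμ : 0 ≤ μ) (a : Fin (N + 2) → Fin n → ℝ) :
    Real.log ((1 / ((N + 2 : ℕ) : ℝ)) *
        ((∑ l ∈ Finset.univ.filter (fun l : Fin (N + 2) => (l : ℕ) < N + 2 - 1),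
            Real.exp (-(1 / 2) * quadForm (N + 2) n (Qmat (N + 2) μ l) a))
          + Real.exp (-(1 / 2) * quadForm (N + 2) n (Pmat (N + 2) μ) a)))
    = seLme (fun l => seEv a (sePX N n (Real.sqrt μ) (μ * seKa N) l)) := by
  rw [seLme, se_filter_sum,
    Fin.sum_univ_castSucc (fun l : Fin (N + 1 + 1) => Real.exp (seEv a (sePX N n (Real.sqrt μ) (μ * seKa N) l)))]
  have hs : Real.sqrt μ ^ 2 = μ := Real.sq_sqrt hμ
  have hk : Real.sqrt (seKa N) * Real.sqrt (seKa N) = seKa N := Real.mul_self_sqrt (seKa_pos N).le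
  refine congrArg (fun x : ℝ => Real.log (1 / ((N + 2 : ℕ) : ℝ) * x)) (congrArg₂ (fun x y : ℝ => x + y) ?_ ?_)
  · refine Finset.sum_congr rfl fun l _ => ?_
    congr 1
    rw [se_quadQ]
    simp only [sePX, sePB, map_add, map_smul, smul_eq_mul, seOm_c, seRho, seH, seZ, seSn_c, hs]
    ring
  · congr 1
    rw [se_quadP]
    simp only [sePX, sePB, map_add, map_smul, smul_eq_mul, seOm_l, seRho, seH, seZ, seSn_l, hs,
      seEv_smul_ip]
    rw [seIp_comm n (seY N) (Real.sqrt (seKa N) • seY N), seEv_smul_ip]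
    linear_combination (1 / 2) * (1 + μ * seKa N)⁻¹ * μ * seEv a (seIp n (seY N) (seY N)) * hk

lemma se_integrand_center (N n : ℕ) (s c : ℝ) (a : Fin (N + 2) → Fin n → ℝ) :
    seLme (fun l => seEv a (sePX N n s c l))
    = seLme (fun l => s * seEv a (sePA n (seU N c) (seX N) l)
        + s ^ 2 * seEv a (sePB n (seOm N) (seX N) (seH N c) (seZ N c) l))
      + (- s * seEv a (seIp n (seV N c) (seX N))) := by
  rw [← seLme_shift (by omega)]
  congr 1
  ext l
  simp only [sePX, sePA, map_add, map_smul, smul_eq_mul, seU, seEv_sub_ip, seEv_smul_ip]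
  ring

lemma se_sumA (N n : ℕ) (c : ℝ) (a : Fin (N + 2) → Fin n → ℝ) :
    ∑ l, seEv a (sePA n (seU N c) (seX N) l) = 0 := by
  simp only [sePA, map_smul, ← Finset.smul_sum]
  rw [← seEv_sum_ip, seU_sum]
  simp [seEv_ip]

/-- reflection of one row -/
def seFlip (N n : ℕ) (a : Fin (N + 2) → Fin n → ℝ) : Fin (N + 2) → Fin n → ℝ :=
  fun m i => (if m = (Fin.last N).castSucc then -1 else 1) * a m i

lemma seFlip_mp (N n : ℕ) : MeasurePreserving (seFlip N n) (stdGaussPi (N + 2) n) (stdGaussPi (N + 2) n) := by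
  unfold stdGaussPi
  refine measurePreserving_pi (f := fun m (v : Fin n → ℝ) i => (if m = (Fin.last N).castSucc then (-1 : ℝ) else 1) * v i) _ _ fun m => ?_
  refine measurePreserving_pi (f := fun _ (x : ℝ) => (if m = (Fin.last N).castSucc then (-1 : ℝ) else 1) * x) _ _ fun i => ?_
  refine ⟨by fun_prop, ?_⟩
  split_ifs
  · simpa using gaussianReal_map_neg (μ := 0) (v := 1)
  · simp

lemma seFlip_L (N n : ℕ) (a : Fin (N + 2) → Fin n → ℝ) (u : Fin (N + 2) → ℝ) (hu : u ⬝ᵥ seX N = 0) (i : Fin n) :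
    ∑ m, u m * seFlip N n a m i = ∑ m, u m * a m i := by
  have h0 : u (Fin.last N).castSucc = 0 := by simpa [seX] using hu
  refine Finset.sum_congr rfl fun m _ => ?_
  unfold seFlip
  split_ifs with h
  · rw [h, h0]; simp
  · simp

lemma seFlip_LX (N n : ℕ) (a : Fin (N + 2) → Fin n → ℝ) (i : Fin n) :
    ∑ m, seX N m * seFlip N n a m i = - ∑ m, seX N m * a m i := by
  rw [← Finset.sum_neg_distrib]
  refine Finset.sum_congr rfl fun m _ => ?_
  by_cases h : m = (Fin.last N).castSucc
  · simp [seX, seFlip, h]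
  · simp [seX, seFlip, h]

lemma seFlip_ipX (N n : ℕ) (a : Fin (N + 2) → Fin n → ℝ) (u : Fin (N + 2) → ℝ) (hu : u ⬝ᵥ seX N = 0) :
    seEv (seFlip N n a) (seIp n u (seX N)) = - seEv a (seIp n u (seX N)) := by
  simp only [seEv_ip, seFlip_L N n a u hu, seFlip_LX, mul_neg, Finset.sum_neg_distrib]

lemma seFlip_ip (N n : ℕ) (a : Fin (N + 2) → Fin n → ℝ) (u v : Fin (N + 2) → ℝ) (hu : u ⬝ᵥ seX N = 0)
    (hv : v ⬝ᵥ seX N = 0) :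
    seEv (seFlip N n a) (seIp n u v) = seEv a (seIp n u v) := by
  simp only [seEv_ip, seFlip_L N n a u hu, seFlip_L N n a v hv]

lemma seFlip_ipXX (N n : ℕ) (a : Fin (N + 2) → Fin n → ℝ) :
    seEv (seFlip N n a) (seIp n (seX N) (seX N)) = seEv a (seIp n (seX N) (seX N)) := by
  simp only [seEv_ip, seFlip_LX, neg_mul_neg]

lemma se_sym (N n : ℕ) (s c : ℝ) (a : Fin (N + 2) → Fin n → ℝ) :
    seLme (fun l => seEv a (sePX N n s c l)) + seLme (fun l => seEv (seFlip N n a) (sePX N n s c l))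
    = seLme (fun l => s * seEv a (sePA n (seU N c) (seX N) l)
        + s ^ 2 * seEv a (sePB n (seOm N) (seX N) (seH N c) (seZ N c) l))
      + seLme (fun l => -s * seEv a (sePA n (seU N c) (seX N) l)
        + s ^ 2 * seEv a (sePB n (seOm N) (seX N) (seH N c) (seZ N c) l)) := by
  rw [se_integrand_center, se_integrand_center, seFlip_ipX _ _ _ _ (seV_X N c)]
  have : (fun l => s * seEv (seFlip N n a) (sePA n (seU N c) (seX N) l)
        + s ^ 2 * seEv (seFlip N n a) (sePB n (seOm N) (seX N) (seH N c) (seZ N c) l))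
      = (fun l => -s * seEv a (sePA n (seU N c) (seX N) l)
        + s ^ 2 * seEv a (sePB n (seOm N) (seX N) (seH N c) (seZ N c) l)) := by
    ext l
    simp only [sePA, sePB, map_add, map_smul, smul_eq_mul, seFlip_ipX _ _ _ _ (seU_X N c l),
      seFlip_ip _ _ _ _ _ (seOm_X N l) (seOm_X N l), seFlip_ipXX]
    ring
  rw [this]
  ring

lemma seEv_meas {q n : ℕ} (P : MvPolynomial (Fin q × Fin n) ℝ) : Measurable (fun a : Fin q → Fin n → ℝ => seEv a P) := by
  induction P using MvPolynomial.induction_on with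
  | C r => simp [seEv]
  | add p q hp hq =>
    simp only [map_add]
    exact hp.add hq
  | mul_X p i hp =>
    simp only [map_mul]
    refine hp.mul ?_
    simp only [seEv, MvPolynomial.aeval_X]
    fun_prop

lemma seLme_meas {q n : ℕ} (P : Fin q → MvPolynomial (Fin q × Fin n) ℝ) :
    Measurable (fun a : Fin q → Fin n → ℝ => seLme (fun l => seEv a (P l))) := by
  unfold seLme
  refine Real.measurable_log.comp (Measurable.const_mul ?_ _)
  exact Finset.measurable_sum _ fun l _ => Real.measurable_exp.comp (seEv_meas (P l))

lemma seLme_int {q n : ℕ} (hq : 1 ≤ q) (P : Fin q → MvPolynomial (Fin q × Fin n) ℝ) :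
    Integrable (fun a : Fin q → Fin n → ℝ => seLme (fun l => seEv a (P l))) (stdGaussPi q n) := by
  have h : Integrable (fun a : Fin q → Fin n → ℝ => ∑ l, |seEv a (P l)|) (stdGaussPi q n) :=
    integrable_finsetSum _ fun l _ => (se_integrable_ev (P l)).abs
  refine h.mono' (seLme_meas P).aestronglyMeasurable (Filter.Eventually.of_forall fun a => ?_)
  rw [Real.norm_eq_abs]
  refine seLme_abs_le hq _ _ fun l => ?_
  exact Finset.single_le_sum (f := fun l => |seEv a (P l)|) (fun _ _ => abs_nonneg _) (Finset.mem_univ l)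

/-- sum of squares polynomial -/
def seT (q n : ℕ) : MvPolynomial (Fin q × Fin n) ℝ := ∑ i : Fin n, ∑ m : Fin q, MvPolynomial.X (m, i) ^ 2

lemma seEv_T {q n : ℕ} (a : Fin q → Fin n → ℝ) : seEv a (seT q n) = ∑ i, ∑ m, a m i ^ 2 := by
  simp [seEv, seT]

lemma se_ip_bound {q n : ℕ} (a : Fin q → Fin n → ℝ) (u v : Fin q → ℝ) :
    |seEv a (seIp n u v)| ≤ ((u ⬝ᵥ u) + (v ⬝ᵥ v)) / 2 * seEv a (seT q n) := by
  have cs : ∀ (u : Fin q → ℝ) (i : Fin n), (∑ m, u m * a m i) ^ 2 ≤ (u ⬝ᵥ u) * ∑ m, a m i ^ 2 := by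
    intro u i
    have := Finset.sum_mul_sq_le_sq_mul_sq Finset.univ u (fun m => a m i)
    simpa [dotProduct, pow_two] using this
  rw [seEv_ip, seEv_T, Finset.mul_sum]
  refine (Finset.abs_sum_le_sum_abs _ _).trans (Finset.sum_le_sum fun i _ => ?_)
  have h1 := cs u i
  have h2 := cs v i
  rw [abs_le]
  constructor
  · nlinarith [sq_nonneg ((∑ m, u m * a m i) + (∑ m, v m * a m i))]
  · nlinarith [sq_nonneg ((∑ m, u m * a m i) - (∑ m, v m * a m i))]

lemma seT_nonneg {q n : ℕ} (a : Fin q → Fin n → ℝ) : 0 ≤ seEv a (seT q n) := by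
  rw [seEv_T]; positivity

def seBd (N : ℕ) : ℝ := 10 * (1 + seKa N) ^ 2

lemma se_bounds (N : ℕ) (c : ℝ) (h0 : 0 ≤ c) (hc : c ≤ seKa N) (l : Fin (N + 2)) :
    (seGam N c l l + 1) / 2 ≤ seBd N ∧ |seH N c l| / 2 * seG N l l + |seZ N c l| ≤ seBd N ∧ 0 ≤ seG N l l := by
  have hk := seKa_pos N
  have w0 : 0 < (1 + c)⁻¹ := by positivity
  have w1 : (1 + c)⁻¹ ≤ 1 := inv_le_one_of_one_le₀ (by linarith)
  have p : (0 : ℝ) < (N : ℝ) + 1 := by positivity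
  have i1 : 1 / ((N : ℝ) + 1) ≤ 1 := by rw [div_le_one p]; linarith [Nat.cast_nonneg (α := ℝ) N]
  have i0 : 0 < 1 / ((N : ℝ) + 1) := by positivity
  have j1 : 1 / ((N : ℝ) + 2) ≤ 1 := by rw [div_le_one (by positivity)]; linarith [Nat.cast_nonneg (α := ℝ) N]
  have j0 : 0 < 1 / ((N : ℝ) + 2) := by positivity
  have hka : seKa N = 1 + 1 / ((N : ℝ) + 1) := by unfold seKa; field_simp; ring
  have hsq : Real.sqrt (1 + c) * Real.sqrt (1 + c) = 1 + c := Real.mul_self_sqrt (by linarith)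
  set j := 1 / ((N : ℝ) + 2)
  set i := 1 / ((N : ℝ) + 1)
  set w := (1 + c)⁻¹
  have hw2 : w ^ 2 ≤ 1 := by nlinarith
  have hj2 : j ^ 2 ≤ 1 := by nlinarith
  have hwk : w ^ 2 * seKa N ≤ seKa N := by nlinarith
  have hwk0 : 0 ≤ w ^ 2 * seKa N := by positivity
  have hjwk : j ^ 2 * (w ^ 2 * seKa N) ≤ seKa N := by nlinarith
  refine Fin.lastCases ?_ (fun l => ?_) l
  · have hG : seG N (Fin.last (N + 1)) (Fin.last (N + 1)) = seKa N := by
      simp only [seG, seSn_l, hka, if_true]; ring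
    refine ⟨?_, ?_, ?_⟩
    · simp only [seGam, seRho, seSn_l, hG, seBd, mul_one]
      have : 0 ≤ j * (w * seKa N) * (w + w) := by positivity
      nlinarith
    · simp only [seH, seZ, seSn_l, hG, seBd]
      rw [abs_of_pos w0, abs_of_nonneg (by positivity)]
      have : w * (2 + c) ≤ 2 + seKa N := by nlinarith
      nlinarith
    · rw [hG]; positivity
  · have hG : seG N l.castSucc l.castSucc = 1 - i := by
      simp only [seG, seSn_c, if_true]; ring
    refine ⟨?_, ?_, ?_⟩
    · simp only [seGam, seRho, seSn_c, hG, seBd, mul_zero, add_zero, hsq]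
      nlinarith
    · simp only [seH, seZ, seSn_c, hG, seBd]
      simp
      nlinarith
    · rw [hG]; linarith

lemma seBd_ge (N : ℕ) : 1 ≤ seBd N := by
  have := seKa_pos N
  unfold seBd; nlinarith

lemma se_A_bound (N n : ℕ) (c : ℝ) (h0 : 0 ≤ c) (hc : c ≤ seKa N) (a : Fin (N + 2) → Fin n → ℝ) (l : Fin (N + 2)) :
    seEv a (sePA n (seU N c) (seX N) l) ^ 2 ≤ (seBd N * (1 + seEv a (seT (N + 2) n))) ^ 2 := by
  have hb := (se_bounds N c h0 hc l).1
  have hT := seT_nonneg a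
  have h := se_ip_bound a (seU N c l) (seX N)
  rw [seU_U, seX_seX] at h
  have h1 := seBd_ge N
  rw [← map_pow, sePA_sq, map_pow]
  refine sq_le_sq' ?_ ?_
  · have := (abs_le.1 h).1
    nlinarith
  · have := (abs_le.1 h).2
    nlinarith

lemma se_B_bound (N n : ℕ) (c : ℝ) (h0 : 0 ≤ c) (hc : c ≤ seKa N) (a : Fin (N + 2) → Fin n → ℝ) (l : Fin (N + 2)) :
    |seEv a (sePB n (seOm N) (seX N) (seH N c) (seZ N c) l)| ≤ (seBd N * (1 + seEv a (seT (N + 2) n))) ^ 2 := by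
  obtain ⟨-, hb, hg⟩ := se_bounds N c h0 hc l
  have hT := seT_nonneg a
  have h := se_ip_bound a (seOm N l) (seOm N l)
  have h' := se_ip_bound a (seX N) (seX N)
  rw [seOm_gram] at h
  rw [seX_seX] at h'
  have h1 := seBd_ge N
  simp only [sePB, map_add, map_smul, smul_eq_mul]
  have e1 : |-(seH N c l / 2) * seEv a (seIp n (seOm N l) (seOm N l))| ≤ |seH N c l| / 2 * (seG N l l * seEv a (seT (N + 2) n)) := by
    rw [abs_mul, abs_neg, abs_div, abs_two]
    refine mul_le_mul_of_nonneg_left ?_ (by positivity)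
    linarith
  have e2 : |seZ N c l * seEv a (seIp n (seX N) (seX N))| ≤ |seZ N c l| * seEv a (seT (N + 2) n) := by
    rw [abs_mul]
    refine mul_le_mul_of_nonneg_left ?_ (by positivity)
    linarith
  refine (abs_add_le _ _).trans ((add_le_add e1 e2).trans ?_)
  have : |seH N c l| / 2 * (seG N l l * seEv a (seT (N + 2) n)) + |seZ N c l| * seEv a (seT (N + 2) n)
      ≤ seBd N * seEv a (seT (N + 2) n) := by nlinarith
  refine this.trans ?_
  have h3 : 1 ≤ seBd N * (1 + seEv a (seT (N + 2) n)) := by nlinarith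
  nlinarith

lemma se_main (N n : ℕ) : ∃ K : ℝ, 0 ≤ K ∧ ∀ μ : ℝ, 0 < μ → μ ≤ 1 →
    |Sfun (N + 2) n μ + μ * seE2 n (seGam N (μ * seKa N)) (seG N) (seH N (μ * seKa N)) (seZ N (μ * seKa N))
      + μ ^ 2 * seE4 n (seGam N (μ * seKa N)) (seG N) (seKK N (μ * seKa N)) (seH N (μ * seKa N)) (seZ N (μ * seKa N))|
    ≤ K * μ ^ 3 := by
  set P6 : MvPolynomial (Fin (N + 2) × Fin n) ℝ := (1 + seT (N + 2) n) ^ 6 with hP6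
  have hP0 : 0 ≤ seE (N + 2) n P6 := by
    rw [seE_apply]
    refine integral_nonneg fun a => ?_
    have := seT_nonneg a
    simp only [hP6, map_pow, map_add, map_one, Pi.zero_apply]
    positivity
  refine ⟨10000000 * seBd N ^ 6 * seE (N + 2) n P6, by have := seBd_ge N; positivity, fun μ h0 h1 => ?_⟩
  have hk := seKa_pos N
  set c := μ * seKa N with hc
  have c0 : 0 ≤ c := by positivity
  have c1 : c ≤ seKa N := by nlinarith
  set s := Real.sqrt μ with hs
  have hs2 : s ^ 2 = μ := Real.sq_sqrt h0.le
  set f : (Fin (N + 2) → Fin n → ℝ) → ℝ := fun a => seLme (fun l => seEv a (sePX N n s c l)) with hf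
  have hS : Sfun (N + 2) n μ = - ∫ a, f a ∂(stdGaussPi (N + 2) n) := by
    unfold Sfun
    congr 1
    refine integral_congr_ae (Filter.Eventually.of_forall fun a => ?_)
    exact se_integrand N n μ h0.le a
  have fint : Integrable f (stdGaussPi (N + 2) n) := seLme_int (by omega) _
  have fint2 : Integrable (fun a => f (seFlip N n a)) (stdGaussPi (N + 2) n) :=
    (seFlip_mp N n).integrable_comp_of_integrable fint
  have hfl : ∫ a, f (seFlip N n a) ∂(stdGaussPi (N + 2) n) = ∫ a, f a ∂(stdGaussPi (N + 2) n) := by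
    conv_rhs => rw [← (seFlip_mp N n).map_eq]
    rw [integral_map (seFlip_mp N n).measurable.aemeasurable (seLme_meas _).aestronglyMeasurable]
  set p2 := seP2 n (seU N c) (seOm N) (seX N) (seH N c) (seZ N c) with hp2
  set p4 := seP4 n (seU N c) (seOm N) (seX N) (seH N c) (seZ N c) with hp4
  have E2 : seE (N + 2) n p2 = seE2 n (seGam N c) (seG N) (seH N c) (seZ N c) := by
    rw [hp2, seE_P2 n _ _ _ _ _ (seU_X N c) (seX_seX N)]
    simp only [seU_U, seOm_gram]
  have E4 : seE (N + 2) n p4 = seE4 n (seGam N c) (seG N) (seKK N c) (seH N c) (seZ N c) := by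
    rw [hp4, seE_P4 n _ _ _ _ _ (seU_X N c) (seOm_X N) (seX_seX N)]
    simp only [seU_U, seOm_gram, seU_Om]
  rw [← E2, ← E4, hS]
  set r := (2 * μ) • p2 + (2 * μ ^ 2) • p4 with hr
  have rint := se_integrable_ev r
  have key : ∫ a, (f a + f (seFlip N n a) - seEv a r) ∂(stdGaussPi (N + 2) n)
      = 2 * ∫ a, f a ∂(stdGaussPi (N + 2) n) - 2 * (μ * seE (N + 2) n p2 + μ ^ 2 * seE (N + 2) n p4) := by
    have hadd : Integrable (fun a => f a + f (seFlip N n a)) (stdGaussPi (N + 2) n) := fint.add fint2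
    rw [integral_sub hadd rint, integral_add fint fint2, hfl, ← seE_apply, hr, map_add, map_smul, map_smul,
      smul_eq_mul, smul_eq_mul]
    ring
  have bd : ∀ a, |f a + f (seFlip N n a) - seEv a r| ≤ 10000000 * seBd N ^ 6 * μ ^ 3 * seEv a P6 := by
    intro a
    have hh := se_expansion (by omega) _ _ (se_sumA N n c a) s
      ((seBd N * (1 + seEv a (seT (N + 2) n))) ^ 2) (by positivity)
      (se_A_bound N n c c0 c1 a) (se_B_bound N n c c0 c1 a)
    rw [← se_sym, ← seEv_P4, ← seEv_P2, hs2] at hh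
    have e1 : seEv a r = 2 * (μ * seEv a p2 + μ ^ 2 * seEv a p4) := by
      rw [hr, map_add, map_smul, map_smul, smul_eq_mul, smul_eq_mul]; ring
    rw [e1]
    refine hh.trans (le_of_eq ?_)
    simp only [hP6, map_pow, map_add, map_one]
    ring
  have hb : |∫ a, (f a + f (seFlip N n a) - seEv a r) ∂(stdGaussPi (N + 2) n)|
      ≤ 10000000 * seBd N ^ 6 * μ ^ 3 * seE (N + 2) n P6 := by
    rw [seE_apply, ← integral_const_mul]
    rw [← Real.norm_eq_abs]
    refine norm_integral_le_of_norm_le ((se_integrable_ev P6).const_mul _) (Filter.Eventually.of_forall fun a => ?_)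
    exact bd a
  rw [key] at hb
  have hb' := abs_le.1 hb
  have hp : 0 ≤ 10000000 * seBd N ^ 6 * seE (N + 2) n P6 * μ ^ 3 := by
    have := seBd_ge N; positivity
  rw [abs_le]
  constructor <;> nlinarith

lemma seE2_val (N n : ℕ) (c : ℝ) (h0 : 0 ≤ c) :
    seE2 n (seGam N c) (seG N) (seH N c) (seZ N c)
      = n / (2 * ((N : ℝ) + 2)) * (seKa N + c * N + (1 + c)⁻¹ ^ 2) := by
  have hsq : Real.sqrt (1 + c) * Real.sqrt (1 + c) = 1 + c := Real.mul_self_sqrt (by linarith)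
  have p1 : (N : ℝ) + 1 ≠ 0 := by positivity
  have p2 : (N : ℝ) + 2 ≠ 0 := by positivity
  have p3 : 1 + c ≠ 0 := by positivity
  rw [seE2, Fin.sum_univ_castSucc]
  simp only [seGam, seG, seH, seZ, seRho, seSn_c, seSn_l, if_true, hsq, Finset.sum_const, Finset.card_univ,
    Fintype.card_fin, nsmul_eq_mul, seKa]
  push_cast
  field_simp
  ring

lemma se_rho_diff (N : ℕ) (l : Fin (N + 2)) : DifferentiableAt ℝ (fun c => seRho N c l) 0 := by
  refine Fin.lastCases ?_ (fun l => ?_) l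
  · simp only [seRho, seSn_l]
    exact DifferentiableAt.inv (by fun_prop) (by norm_num)
  · simp only [seRho, seSn_c]
    exact DifferentiableAt.sqrt (by fun_prop) (by norm_num)

lemma se_w_diff : DifferentiableAt ℝ (fun c : ℝ => (1 + c)⁻¹) 0 :=
  DifferentiableAt.inv (by fun_prop) (by norm_num)

lemma se_h_diff (N : ℕ) (l : Fin (N + 2)) : DifferentiableAt ℝ (fun c => seH N c l) 0 := by
  refine Fin.lastCases ?_ (fun l => ?_) l
  · simp only [seH, seSn_l]
    exact se_w_diff
  · simp only [seH, seSn_c]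
    fun_prop

lemma se_z_diff (N : ℕ) (l : Fin (N + 2)) : DifferentiableAt ℝ (fun c => seZ N c l) 0 := by
  have := se_w_diff
  refine Fin.lastCases ?_ (fun l => ?_) l
  · simp only [seZ, seSn_l]
    fun_prop
  · simp only [seZ, seSn_c]
    fun_prop

lemma se_gam_diff (N : ℕ) (l k : Fin (N + 2)) : DifferentiableAt ℝ (fun c => seGam N c l k) 0 := by
  have := se_w_diff
  have h1 := se_rho_diff N l
  have h2 := se_rho_diff N k
  simp only [seGam]
  fun_prop

lemma se_kk_diff (N : ℕ) (l k : Fin (N + 2)) : DifferentiableAt ℝ (fun c => seKK N c l k) 0 := by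
  have := se_w_diff
  have h1 := se_rho_diff N l
  simp only [seKK]
  fun_prop

def seE4c (N n : ℕ) (c : ℝ) : ℝ := seE4 n (seGam N c) (seG N) (seKK N c) (seH N c) (seZ N c)

lemma se_AA_diff (N n : ℕ) (l k : Fin (N + 2)) : DifferentiableAt ℝ (fun c => seAA n (seGam N c) l k) 0 := by
  have h1 := se_gam_diff N l l
  have h2 := se_gam_diff N k k
  have h3 := se_gam_diff N l k
  simp only [seAA]
  fun_prop

lemma se_C_diff (N n : ℕ) (l k : Fin (N + 2)) :
    DifferentiableAt ℝ (fun c => seC n (seGam N c) (seG N) (seKK N c) (seH N c) (seZ N c) l k) 0 := by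
  have h1 := se_gam_diff N l l
  have h2 := se_kk_diff N l k
  have h3 := se_h_diff N k
  have h4 := se_z_diff N k
  simp only [seC]
  fun_prop

lemma se_DD_diff (N n : ℕ) (l k : Fin (N + 2)) :
    DifferentiableAt ℝ (fun c => seDD n (seG N) (seH N c) (seZ N c) l k) 0 := by
  have h3 := se_h_diff N k
  have h4 := se_z_diff N k
  have h5 := se_h_diff N l
  have h6 := se_z_diff N l
  simp only [seDD]
  fun_prop

lemma se_E4_diff (N n : ℕ) : DifferentiableAt ℝ (seE4c N n) 0 := by
  have h1 := se_AA_diff N n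
  have h2 := se_C_diff N n
  have h3 := se_DD_diff N n
  unfold seE4c seE4
  refine DifferentiableAt.sub (DifferentiableAt.const_mul (DifferentiableAt.fun_sum fun l _ => ?_) _)
    (DifferentiableAt.const_mul (DifferentiableAt.fun_sum fun l _ => DifferentiableAt.fun_sum fun k _ => ?_) _)
  · exact (((h1 l l).div_const _).add ((h2 l l).div_const _)).add ((h3 l l).div_const _)
  · exact ((((h1 l k).div_const _).add ((h2 l k).div_const _)).add ((h2 k l).div_const _)).add (h3 l k)

lemma se_E4_lip (N n : ℕ) : ∃ L : ℝ, 0 ≤ L ∧ ∃ ε : ℝ, 0 < ε ∧ ∀ c : ℝ, 0 ≤ c → c < ε →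
    |seE4c N n c - seE4c N n 0| ≤ L * c := by
  obtain ⟨L, hL⟩ := (se_E4_diff N n).isBigO_sub.bound
  obtain ⟨ε, he, h⟩ := Metric.eventually_nhds_iff.1 hL
  refine ⟨|L|, abs_nonneg _, ε, he, fun c h0 h1 => ?_⟩
  have := h (y := c) (by rw [Real.dist_eq, sub_zero, abs_of_nonneg h0]; exact h1)
  rw [Real.norm_eq_abs, Real.norm_eq_abs, sub_zero, abs_of_nonneg h0] at this
  exact this.trans (mul_le_mul_of_nonneg_right (le_abs_self L) h0)

lemma se_dsum {N : ℕ} (F : Fin (N + 2) → Fin (N + 2) → ℝ) (p d x y t : ℝ)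
    (h1 : ∀ l k : Fin (N + 1), l ≠ k → F l.castSucc k.castSucc = p)
    (h2 : ∀ l : Fin (N + 1), F l.castSucc l.castSucc = d)
    (h3 : ∀ l : Fin (N + 1), F l.castSucc (Fin.last (N + 1)) = x)
    (h4 : ∀ l : Fin (N + 1), F (Fin.last (N + 1)) l.castSucc = y)
    (h5 : F (Fin.last (N + 1)) (Fin.last (N + 1)) = t) :
    ∑ l, ∑ k, F l k = ((N : ℝ) + 1) * N * p + ((N : ℝ) + 1) * d + ((N : ℝ) + 1) * (x + y) + t := by
  have hF : ∀ l k : Fin (N + 1), F l.castSucc k.castSucc = p + if l = k then d - p else 0 := by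
    intro l k
    split_ifs with h
    · rw [h, h2]; ring
    · rw [h1 l k h]; ring
  rw [Fin.sum_univ_castSucc]
  simp only [Fin.sum_univ_castSucc (n := N + 1), hF, h3, h4, h5, Finset.sum_add_distrib, Finset.sum_const, Finset.card_univ,
    Fintype.card_fin, nsmul_eq_mul, Finset.sum_ite_eq, Finset.mem_univ, if_true]
  push_cast
  ring

def seTm (n : ℕ) (gl gk glk ul uk ulk vlk vkl hl hk zl zk : ℝ) : ℝ :=
  (n ^ 2 + 2 * n) * (gl * gk + 2 * glk ^ 2) / 4
  + (-(hk / 2) * (n ^ 2 * gl * uk + 2 * n * vlk ^ 2) + zk * ((n ^ 2 + 2 * n) * gl)) / 2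
  + (-(hl / 2) * (n ^ 2 * gk * ul + 2 * n * vkl ^ 2) + zl * ((n ^ 2 + 2 * n) * gk)) / 2
  + (hl * hk / 4 * (n ^ 2 * ul * uk + 2 * n * ulk ^ 2)
        - n ^ 2 / 2 * (zk * hl * ul + zl * hk * uk)
        + zl * zk * (n ^ 2 + 2 * n))

lemma seG_cd (N : ℕ) (l : Fin (N + 1)) : seG N l.castSucc l.castSucc = 1 - 1 / ((N : ℝ) + 1) := by
  simp [seG]

lemma seG_co (N : ℕ) (l k : Fin (N + 1)) (h : l ≠ k) : seG N l.castSucc k.castSucc = - (1 / ((N : ℝ) + 1)) := by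
  simp [seG, h]

lemma seG_cl (N : ℕ) (l : Fin (N + 1)) : seG N l.castSucc (Fin.last (N + 1)) = 0 := by
  have : ¬ (l.castSucc = Fin.last (N + 1)) := (Fin.castSucc_lt_last l).ne
  simp [seG, this]

lemma seG_lc (N : ℕ) (l : Fin (N + 1)) : seG N (Fin.last (N + 1)) l.castSucc = 0 := by
  have : ¬ (Fin.last (N + 1) = l.castSucc) := (Fin.castSucc_lt_last l).ne'
  simp [seG, this]

lemma seG_ll (N : ℕ) : seG N (Fin.last (N + 1)) (Fin.last (N + 1)) = 1 + 1 / ((N : ℝ) + 1) := by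
  simp [seG]; ring

lemma seRho_zero (N : ℕ) (l : Fin (N + 2)) : seRho N 0 l = 1 := by
  refine Fin.lastCases ?_ (fun l => ?_) l <;> simp [seRho]

lemma seH_zero (N : ℕ) (l : Fin (N + 2)) : seH N 0 l = 1 := by
  refine Fin.lastCases ?_ (fun l => ?_) l <;> simp [seH]

lemma seZ_c (N : ℕ) (l : Fin (N + 1)) : seZ N 0 l.castSucc = 0 := by simp [seZ]

lemma seZ_l (N : ℕ) : seZ N 0 (Fin.last (N + 1)) = 1 + 1 / ((N : ℝ) + 1) := by
  have p1 : (N : ℝ) + 1 ≠ 0 := by positivity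
  simp only [seZ, seSn_l, seKa]
  field_simp
  ring

lemma seGam_zero (N : ℕ) (l k : Fin (N + 2)) :
    seGam N 0 l k = (if l = k then 1 else 0) - 1 / ((N : ℝ) + 2) := by
  have p1 : (N : ℝ) + 1 ≠ 0 := by positivity
  have p2 : (N : ℝ) + 2 ≠ 0 := by positivity
  simp only [seGam, seRho_zero, seG, seKa]
  field_simp
  ring

lemma seGam_d (N : ℕ) (l : Fin (N + 2)) : seGam N 0 l l = 1 - 1 / ((N : ℝ) + 2) := by
  simp [seGam_zero]

lemma seGam_o (N : ℕ) (l k : Fin (N + 2)) (h : l ≠ k) : seGam N 0 l k = - (1 / ((N : ℝ) + 2)) := by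
  simp [seGam_zero, h]

lemma seKK_zero (N : ℕ) (l k : Fin (N + 2)) :
    seKK N 0 l k = seG N l k - 1 / ((N : ℝ) + 1) * seSn 0 1 k := by
  have p1 : (N : ℝ) + 1 ≠ 0 := by positivity
  have p2 : (N : ℝ) + 2 ≠ 0 := by positivity
  simp only [seKK, seRho_zero, seKa]
  field_simp
  ring

lemma seE4_zero (N n : ℕ) : seE4c N n 0
    = n * ((n : ℝ) + (N + 2)) * (N + 1) / (4 * ((N : ℝ) + 2) ^ 2) - n * ((N : ℝ) - 2) / (2 * (N + 1)) := by
  have p1 : (N : ℝ) + 1 ≠ 0 := by positivity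
  have p2 : (N : ℝ) + 2 ≠ 0 := by positivity
  have hcl : ∀ l : Fin (N + 1), l.castSucc ≠ Fin.last (N + 1) := fun l => (Fin.castSucc_lt_last l).ne
  unfold seE4c seE4
  set i := 1 / ((N : ℝ) + 1) with hi
  set j := 1 / ((N : ℝ) + 2) with hj
  rw [se_dsum _ (seTm n (1 - j) (1 - j) (-j) (1 - i) (1 - i) (-i) (-i) (-i) 1 1 0 0)
    (seTm n (1 - j) (1 - j) (1 - j) (1 - i) (1 - i) (1 - i) (1 - i) (1 - i) 1 1 0 0)
    (seTm n (1 - j) (1 - j) (-j) (1 - i) (1 + i) 0 (-i) 0 1 1 0 (1 + i))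
    (seTm n (1 - j) (1 - j) (-j) (1 + i) (1 - i) 0 0 (-i) 1 1 (1 + i) 0)
    (seTm n (1 - j) (1 - j) (1 - j) (1 + i) (1 + i) (1 + i) 1 1 1 1 (1 + i) (1 + i)),
    Fin.sum_univ_castSucc]
  · simp only [seAA, seC, seDD, seGam_d, seKK_zero, seG_cd, seG_ll, seH_zero, seZ_c, seZ_l, seSn_c, seSn_l,
      Finset.sum_const, Finset.card_univ, Fintype.card_fin, nsmul_eq_mul, seTm]
    push_cast
    simp only [← hi, ← hj]
    rw [hi, hj]
    field_simp
    ring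
  · intro l k h
    have h' : l.castSucc ≠ k.castSucc := fun e => h (Fin.castSucc_injective _ e)
    simp only [seAA, seC, seDD, seGam_d, seGam_o N _ _ h', seKK_zero, seG_cd, seG_co N _ _ h, seG_co N _ _ h.symm,
      seH_zero, seZ_c, seSn_c, seTm, ← hi, ← hj]
    ring
  · intro l
    simp only [seAA, seC, seDD, seGam_d, seKK_zero, seG_cd,
      seH_zero, seZ_c, seSn_c, seTm, ← hi, ← hj]
    ring
  · intro l
    simp only [seAA, seC, seDD, seGam_d, seGam_o N _ _ (hcl l), seKK_zero, seG_cd, seG_cl, seG_lc, seG_ll,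
      seH_zero, seZ_c, seZ_l, seSn_c, seSn_l, seTm, ← hi, ← hj]
    ring
  · intro l
    simp only [seAA, seC, seDD, seGam_d, seGam_o N _ _ (hcl l).symm, seKK_zero, seG_cd, seG_cl, seG_lc, seG_ll,
      seH_zero, seZ_c, seZ_l, seSn_c, seSn_l, seTm, ← hi, ← hj]
    ring
  · simp only [seAA, seC, seDD, seGam_d, seKK_zero, seG_ll,
      seH_zero, seZ_l, seSn_l, seTm, ← hi, ← hj]
    ring

lemma se_w2 (c : ℝ) (h : 0 ≤ c) : |(1 + c)⁻¹ ^ 2 - 1 + 2 * c| ≤ 3 * c ^ 2 := by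
  have e : (1 + c)⁻¹ ^ 2 - 1 + 2 * c = (3 + 2 * c) * c ^ 2 / (1 + c) ^ 2 := by
    field_simp
    ring
  rw [e, abs_of_nonneg (by positivity), div_le_iff₀ (by positivity)]
  nlinarith [sq_nonneg c, mul_nonneg h (sq_nonneg c), sq_nonneg (c ^ 2)]

lemma se_final (N n : ℕ) :
    ∃ C > (0 : ℝ), ∃ δ ∈ Set.Ioo (0 : ℝ) 1, ∀ μ ∈ Set.Ioo (0 : ℝ) δ,
      |Sfun (N + 2) n μ
        + ((n : ℝ) * (2 * ((N : ℝ) + 2) - 1) / (2 * ((N : ℝ) + 2) * ((N : ℝ) + 1))) * μ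
        + ((n : ℝ) * ((n : ℝ) + ((N : ℝ) + 2)) * ((N : ℝ) + 1) / (4 * ((N : ℝ) + 2) ^ 2)) * μ ^ 2|
      ≤ C * μ ^ 3 := by
  obtain ⟨K, hK, hmain⟩ := se_main N n
  obtain ⟨L, hL, ε, hε, hlip⟩ := se_E4_lip N n
  have hk := seKa_pos N
  have p1 : (N : ℝ) + 1 ≠ 0 := by positivity
  have p2 : (N : ℝ) + 2 ≠ 0 := by positivity
  refine ⟨K + n / (2 * ((N : ℝ) + 2)) * 3 * seKa N ^ 2 + L * seKa N + 1, by positivity,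
    min (1 / 2) (ε / seKa N), ⟨by positivity, (min_le_left _ _).trans_lt (by norm_num)⟩, ?_⟩
  rintro μ ⟨h0, h1⟩
  have hμ1 : μ ≤ 1 := by linarith [min_le_left (1 / 2) (ε / seKa N)]
  have hce : μ * seKa N < ε := by
    have := h1.trans_le (min_le_right _ _)
    rwa [lt_div_iff₀ hk] at this
  have hm := hmain μ h0 hμ1
  have hl := hlip (μ * seKa N) (by positivity) hce
  have hw := se_w2 (μ * seKa N) (by positivity)
  rw [seE2_val N n _ (by positivity)] at hm
  change |_ + _ + μ ^ 2 * seE4c N n (μ * seKa N)| ≤ _ at hm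
  rw [seE4_zero] at hl
  set e4 := seE4c N n (μ * seKa N)
  set W := (1 + μ * seKa N)⁻¹ ^ 2
  set S := Sfun (N + 2) n μ
  have id1 : S + ((n : ℝ) * (2 * ((N : ℝ) + 2) - 1) / (2 * ((N : ℝ) + 2) * ((N : ℝ) + 1))) * μ
        + ((n : ℝ) * ((n : ℝ) + ((N : ℝ) + 2)) * ((N : ℝ) + 1) / (4 * ((N : ℝ) + 2) ^ 2)) * μ ^ 2
      = (S + μ * (n / (2 * ((N : ℝ) + 2)) * (seKa N + μ * seKa N * N + W)) + μ ^ 2 * e4)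
        - μ * (n / (2 * ((N : ℝ) + 2))) * (W - 1 + 2 * (μ * seKa N))
        - μ ^ 2 * (e4 - (n * ((n : ℝ) + (N + 2)) * (N + 1) / (4 * ((N : ℝ) + 2) ^ 2) - n * ((N : ℝ) - 2) / (2 * (N + 1)))) := by
    rw [seKa]
    field_simp
    ring
  rw [id1]
  have b1 : |μ * (n / (2 * ((N : ℝ) + 2))) * (W - 1 + 2 * (μ * seKa N))|
      ≤ μ * (n / (2 * ((N : ℝ) + 2))) * (3 * (μ * seKa N) ^ 2) := by
    rw [abs_mul, abs_of_nonneg (by positivity : 0 ≤ μ * ((n : ℝ) / (2 * ((N : ℝ) + 2))))]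
    exact mul_le_mul_of_nonneg_left hw (by positivity)
  have b2 := mul_le_mul_of_nonneg_left hl (sq_nonneg μ)
  rw [← abs_of_nonneg (sq_nonneg μ), ← abs_mul, abs_of_nonneg (sq_nonneg μ)] at b2
  refine (abs_sub _ _).trans ?_
  refine (add_le_add (abs_sub _ _) le_rfl).trans ?_
  have h3 : 0 ≤ μ ^ 3 := by positivity
  nlinarith

/-- equation (60) of the paper.
There are constants `C > 0` and `δ ∈ (0,1)` such that for all `μ ∈ (0,δ)`:
`| S + (n(2q−1)/(2q(q−1)))μ + (n(n+q)(q−1)/(4q²))μ² | ≤ Cμ³`, i.e.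
`S = −(n(2q−1)/(2q(q−1)))μ − (n(n+q)(q−1)/(4q²))μ² + O(μ³)` as `μ → 0⁺`. -/
theorem Sfun_second_order_expansion
    (q n : ℕ) (hq : 2 ≤ q) (hn : 1 ≤ n) :
    ∃ C > (0 : ℝ), ∃ δ ∈ Set.Ioo (0 : ℝ) 1, ∀ μ ∈ Set.Ioo (0 : ℝ) δ,
      |Sfun q n μ
        + ((n : ℝ) * (2 * (q : ℝ) - 1) / (2 * (q : ℝ) * ((q : ℝ) - 1))) * μ
        + ((n : ℝ) * ((n : ℝ) + (q : ℝ)) * ((q : ℝ) - 1) / (4 * (q : ℝ) ^ 2)) * μ ^ 2|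
      ≤ C * μ ^ 3 := by
  obtain ⟨N, rfl⟩ : ∃ N, q = N + 2 := ⟨q - 2, by omega⟩
  have h1 : ((N + 2 : ℕ) : ℝ) = (N : ℝ) + 2 := by push_cast; ring
  have h2 : (N : ℝ) + 2 - 1 = N + 1 := by ring
  rw [h1, h2]
  exact se_final N n

end
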